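/- arXiv:1511.06808 — 2 statements merged into one kernel-verified Lean document; each statement's English description precedes it below -/
import Mathlib

section
/- Existence of dual paths: Let Σ be an arrangement of arcs in ℝ² and let a, b be points of ℝ² lying on no arc of Σ. Then there exists a simple arc γ in ℝ² from a to b such that γ contains no point lying on two distinct arcs of Σ, and γ intersects each arc of Σ in at most one point, at which γ crosses that arc. -/
open Set Topology

noncomputable section

abbrev Plane : Type := EuclideanSpace ℝ (Fin 2)

abbrev SpherePt : Type := ↥(Metric.sphere (0 : EuclideanSpace ℝ (Fin 3)) 1)

/-- `γ` crosses the curve `σ` at `p`: `p` lies on both sets, and in every neighbourhood of `p`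
there is a smaller neighbourhood `V` such that `V \ σ` splits into two connected "sides",
both of which meet `γ`. -/
def CrossesAt {X : Type*} [TopologicalSpace X] (σ γ : Set X) (p : X) : Prop :=
  p ∈ σ ∧ p ∈ γ ∧ ∀ U ∈ nhds p, ∃ V ∈ nhds p, V ⊆ U ∧
    ∃ C₁ C₂ : Set X, V \ σ = C₁ ∪ C₂ ∧ Disjoint C₁ C₂ ∧
      IsPreconnected C₁ ∧ IsPreconnected C₂ ∧ (γ ∩ C₁).Nonempty ∧ (γ ∩ C₂).Nonempty

/-- `Δ` is one of the closed regions ("closed discs") bounded by the curve `C`: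
it is the union of `C` with a connected component of the complement of `C`. -/
def IsClosedSide {X : Type*} [TopologicalSpace X] (C Δ : Set X) : Prop :=
  ∃ q, q ∉ C ∧ Δ = connectedComponentIn Cᶜ q ∪ C

/-- `Δ` is one of the open regions ("open discs") bounded by the curve `C`. -/
def IsOpenSide {X : Type*} [TopologicalSpace X] (C Δ : Set X) : Prop :=
  ∃ q, q ∉ C ∧ Δ = connectedComponentIn Cᶜ q

/-- `G` is a face (a connected component of the complement) of the point set `A`. -/
def IsFaceOf {X : Type*} [TopologicalSpace X] (A G : Set X) : Prop :=
  ∃ q, q ∉ A ∧ G = connectedComponentIn Aᶜ q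

/-- A good drawing of the complete graph `K_n` in the space `X`. -/
structure GoodDrawing (n : ℕ) (X : Type*) [TopologicalSpace X] where
  vtx : Fin n → X
  arc : Fin n → Fin n → Set X
  vtx_inj : Function.Injective vtx
  arc_symm : ∀ u v, arc u v = arc v u
  isArc : ∀ u v, u ≠ v → ∃ f : ℝ → X, ContinuousOn f (Set.Icc 0 1) ∧
    Set.InjOn f (Set.Icc 0 1) ∧ f 0 = vtx u ∧ f 1 = vtx v ∧ arc u v = f '' Set.Icc 0 1
  vtx_not_mem : ∀ u v w, u ≠ v → w ≠ u → w ≠ v → vtx w ∉ arc u v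
  adj_arcs : ∀ u v w, u ≠ v → u ≠ w → v ≠ w → arc u v ∩ arc u w = {vtx u}
  indep_arcs : ∀ u v x y : Fin n, u ≠ v → x ≠ y → u ≠ x → u ≠ y → v ≠ x → v ≠ y →
    (arc u v ∩ arc x y).Subsingleton ∧
      ∀ p ∈ arc u v ∩ arc x y,
        CrossesAt (arc u v) (arc x y) p ∧ CrossesAt (arc x y) (arc u v) p
  no_triple_pt : ∀ p : X, p ∉ Set.range vtx → ∀ u v x y s t : Fin n,
    u ≠ v → x ≠ y → s ≠ t →
    ({u, v} : Finset (Fin n)) ≠ {x, y} → ({u, v} : Finset (Fin n)) ≠ {s, t} →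
    ({x, y} : Finset (Fin n)) ≠ {s, t} →
    ¬(p ∈ arc u v ∧ p ∈ arc x y ∧ p ∈ arc s t)

namespace GoodDrawing

variable {n : ℕ} {X : Type*} [TopologicalSpace X]

/-- The point set of the subdrawing induced by the set `W` of vertices. -/
def image (D : GoodDrawing n X) (W : Set (Fin n)) : Set X :=
  (D.vtx '' W) ∪ ⋃ u ∈ W, ⋃ v ∈ W, ⋃ (_ : u ≠ v), D.arc u v

/-- The simple closed curve that is the drawing of the 3-cycle on `a`, `b`, `c`. -/
def tri (D : GoodDrawing n X) (a b c : Fin n) : Set X :=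
  D.arc a b ∪ D.arc b c ∪ D.arc a c

/-- `Δ` is convex: it contains the arc between any two vertex points it contains. -/
def ConvexDisc (D : GoodDrawing n X) (Δ : Set X) : Prop :=
  ∀ x y : Fin n, x ≠ y → D.vtx x ∈ Δ → D.vtx y ∈ Δ → D.arc x y ⊆ Δ

/-- `F` is a face of the drawing `D`. -/
def IsFace (D : GoodDrawing n X) (F : Set X) : Prop :=
  IsFaceOf (D.image Set.univ) F

/-- `D` is face-convex with outer face `F`. -/
def FaceConvex (D : GoodDrawing n X) (F : Set X) : Prop :=
  D.IsFace F ∧ ∀ a b c : Fin n, a ≠ b → a ≠ c → b ≠ c →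
    ∀ Δ : Set X, IsClosedSide (D.tri a b c) Δ → ¬F ⊆ Δ → D.ConvexDisc Δ

/-- `D` is a convex drawing: every 3-cycle has at least one convex closed side. -/
def IsConvex (D : GoodDrawing n X) : Prop :=
  ∀ a b c : Fin n, a ≠ b → a ≠ c → b ≠ c →
    ∃ Δ : Set X, IsClosedSide (D.tri a b c) Δ ∧ D.ConvexDisc Δ

/-- The closed curve drawn by the cycle `c 0, c 1, …, c (m-1), c 0` of `K_n`. -/
def cycCurve (D : GoodDrawing n X) {m : ℕ} [NeZero m] (c : Fin m → Fin n) : Set X :=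
  ⋃ i : Fin m, D.arc (c i) (c (i + 1))

/-- `Δ` is the convex hull `Δ_W` of the vertex set `W` (relative to the outer face `F`):
the face of the subdrawing `D[W]` containing `F` is bounded by a cycle `C_W` on vertices
of `W`, and `Δ` is the closed disc bounded by `D[C_W]` disjoint from `F`. -/
def IsHull (D : GoodDrawing n X) (F : Set X) (W : Set (Fin n)) (Δ : Set X) : Prop :=
  ∃ (m : ℕ) (c : Fin (m + 3) → Fin n), Function.Injective c ∧ (∀ i, c i ∈ W) ∧
    (∃ G : Set X, IsFaceOf (D.image W) G ∧ F ⊆ G ∧ frontier G = D.cycCurve c) ∧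
    IsClosedSide (D.cycCurve c) Δ ∧ Disjoint F Δ

/-- The data of the two local sides `C 0`, `C 1` of the arc `D[uv]` at an interior
point `p` of the arc. -/
def LocalSides (D : GoodDrawing n X) (u v : Fin n) (p : X) (C : Fin 2 → Set X) : Prop :=
  p ∈ D.arc u v ∧ p ≠ D.vtx u ∧ p ≠ D.vtx v ∧
    ∃ V ∈ nhds p, C 0 ∪ C 1 = V \ D.arc u v ∧ Disjoint (C 0) (C 1) ∧
      IsPreconnected (C 0) ∧ IsPreconnected (C 1) ∧ (C 0).Nonempty ∧ (C 1).Nonempty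

/-- Relative to the outer face `F` and the local sides `C` of `D[uv]` at `p`, the
vertex `w` is on side `i` of `uv`: the closed disc bounded by `D[{u,v,w}]` not
containing `F` lies locally on side `i` of `D[uv]`. -/
def OnSide (D : GoodDrawing n X) (F : Set X) (u v : Fin n) (p : X) (C : Fin 2 → Set X)
    (i : Fin 2) (w : Fin n) : Prop :=
  w ≠ u ∧ w ≠ v ∧ ∃ Δ : Set X, IsClosedSide (D.tri u v w) Δ ∧ ¬F ⊆ Δ ∧
    ∃ V ∈ nhds p, C i ∩ V ⊆ Δ

/-- `Side(uv, i)`: the set consisting of `u`, `v` and all vertices on side `i` of `uv`. -/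
def SideSet (D : GoodDrawing n X) (F : Set X) (u v : Fin n) (p : X) (C : Fin 2 → Set X)
    (i : Fin 2) : Set (Fin n) :=
  {u, v} ∪ {w : Fin n | D.OnSide F u v p C i w}

/-- The edge-arcs `D[uv]` and `D[xy]` cross: they share a non-vertex point. -/
def Crosses (D : GoodDrawing n X) (u v x y : Fin n) : Prop :=
  ∃ p : X, p ∈ D.arc u v ∩ D.arc x y ∧ p ∉ Set.range D.vtx

/-- The set of empty triangles of `D`: pairs of a 3-set of vertices together with an
open disc bounded by the corresponding triangle containing no vertex point. -/
def emptyTriangles (D : GoodDrawing n X) : Set (Finset (Fin n) × Set X) :=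
  {T | ∃ a b c : Fin n, a ≠ b ∧ a ≠ c ∧ b ≠ c ∧ T.1 = {a, b, c} ∧
    IsOpenSide (D.tri a b c) T.2 ∧ ∀ i, D.vtx i ∉ T.2}

end GoodDrawing

/-- A pseudoline in the plane. -/
def IsPseudoline (σ : Set Plane) : Prop :=
  IsClosed σ ∧ Nonempty (↥σ ≃ₜ ℝ) ∧ ¬IsPreconnected σᶜ

/-- An arrangement of pseudolines: any two distinct members meet in exactly one
point, at which they cross. -/
def IsArrangement (A : Finset (Set Plane)) : Prop :=
  (∀ σ ∈ A, IsPseudoline σ) ∧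
    ∀ σ ∈ A, ∀ τ ∈ A, σ ≠ τ →
      ∃ p : Plane, σ ∩ τ = {p} ∧ CrossesAt σ τ p ∧ CrossesAt τ σ p

/-- A planar good drawing of `K_n` is pseudolinear if some arrangement of pseudolines
contains, for each edge, a distinct pseudoline containing that edge-arc. -/
def GoodDrawing.Pseudolinear {n : ℕ} (D : GoodDrawing n Plane) : Prop :=
  ∃ (A : Finset (Set Plane)) (L : Fin n → Fin n → Set Plane), IsArrangement A ∧
    (∀ u v, u ≠ v → L u v ∈ A ∧ D.arc u v ⊆ L u v) ∧
    (∀ u v, L u v = L v u) ∧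
    ∀ u v x y : Fin n, u ≠ v → x ≠ y →
      ({u, v} : Finset (Fin n)) ≠ {x, y} → L u v ≠ L x y

/-- An arrangement of arcs: a finite family of simple open arcs (closed subsets of the
plane homeomorphic to `ℝ`) each disconnecting the plane, any two distinct members of
which have at most one common point, at which they cross. -/
def IsArcArrangement (A : Finset (Set Plane)) : Prop :=
  (∀ σ ∈ A, IsClosed σ ∧ Nonempty (↥σ ≃ₜ ℝ) ∧ ¬IsPreconnected σᶜ) ∧
    ∀ σ ∈ A, ∀ τ ∈ A, σ ≠ τ → (σ ∩ τ).Subsingleton ∧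
      ∀ p ∈ σ ∩ τ, CrossesAt σ τ p ∧ CrossesAt τ σ p

section DP

open Filter


lemma dp_exists_log {X : Type*} [TopologicalSpace X] [SimplyConnectedSpace X]
    [LocallyPathConnectedSpace X] {g : X → ℂ} (hg : Continuous g) (h0 : ∀ x, g x ≠ 0) :
    ∃ f : X → ℂ, Continuous f ∧ ∀ x, Complex.exp (f x) = g x := by
  obtain ⟨x₀⟩ : Nonempty X := inferInstance
  rcases Complex.isCoveringMapOn_exp.existsUnique_continuousMap_lifts
    (⟨g, hg⟩ : C(X, ℂ)) (a₀ := x₀) (e₀ := Complex.log (g x₀)) (Complex.exp_log (h0 x₀))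
    (fun x ↦ h0 x) with ⟨f, ⟨-, hf⟩, -⟩
  exact ⟨f, f.continuous, fun x => congrFun hf x⟩

lemma dp_log_unique {X : Type*} [TopologicalSpace X] {s : Set X} (hs : IsPreconnected s)
    {f g : X → ℂ} (hf : ContinuousOn f s) (hg : ContinuousOn g s)
    (h : ∀ x ∈ s, Complex.exp (f x) = Complex.exp (g x)) {x₀ : X} (hx : x₀ ∈ s)
    (h0 : f x₀ = g x₀) : EqOn f g s := by
  refine Complex.isCoveringMap_exp.eqOn_of_comp_eqOn hs hf hg ?_ hx h0
  intro x hx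
  exact Subtype.ext (h x hx)

lemma dp_degree {W : Set ℂ} (hW : IsOpen W) (hb : Bornology.IsBounded W) {c : ℂ} (hc : c ∈ W)
    {G : ℂ → ℂ} (hG : ContinuousOn G (closure W)) (hG0 : ∀ w ∈ closure W, G w ≠ 0) (k : ℤ)
    (hfr : ∀ w ∈ frontier W, G w = (w - c) ^ k) : k = 0 := by
  classical
  set h : ℂ → ℂ := W.piecewise G (fun w => (w - c) ^ k) with hh
  have hne : ∀ w, w ∉ W → w - c ≠ 0 := fun w hw h => hw (by rw [sub_eq_zero.1 h]; exact hc)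
  have hcont : Continuous h := by
    refine continuous_piecewise hfr hG ?_
    rw [hW.isClosed_compl.closure_eq]
    intro w hw
    exact ((continuousAt_id.sub continuousAt_const).zpow₀ k (Or.inl (hne w hw))).continuousWithinAt
  have h0 : ∀ w, h w ≠ 0 := by
    intro w
    by_cases hw : w ∈ W
    · simpa [hh, hw] using hG0 w (subset_closure hw)
    · simpa [hh, hw] using zpow_ne_zero k (hne w hw)
  obtain ⟨L, hL, hLe⟩ := dp_exists_log hcont h0
  obtain ⟨R, hR0, hR⟩ := hb.subset_ball_lt 0 c
  have key : ∀ θ : ℝ, Complex.exp (L (c + R * Complex.exp (θ * Complex.I))) =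
      Complex.exp (k * (Real.log R + θ * Complex.I)) := by
    intro θ
    rw [hLe]
    have hnot : c + R * Complex.exp (θ * Complex.I) ∉ W := by
      intro hmem
      have := hR hmem
      rw [Metric.mem_ball, dist_eq_norm] at this
      simp [Complex.norm_exp_ofReal_mul_I, abs_of_pos hR0] at this
    simp only [hh, Set.piecewise_eq_of_notMem _ _ _ hnot]
    rw [Complex.exp_int_mul, Complex.exp_add, ← Complex.ofReal_exp, Real.exp_log hR0]
    congr 1; ring
  set M : ℝ → ℂ := fun θ => L (c + R * Complex.exp (θ * Complex.I)) -
      L (c + R * Complex.exp ((0:ℝ) * Complex.I)) + k * (Real.log R + (0:ℝ) * Complex.I)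
  have := dp_log_unique (X := ℝ) isPreconnected_univ (f := M)
    (g := fun θ => k * (Real.log R + θ * Complex.I)) (by fun_prop) (by fun_prop)
    (fun θ _ => by
      simp only [M]
      rw [Complex.exp_add, Complex.exp_sub, key θ, key 0, div_mul_cancel₀]
      exact Complex.exp_ne_zero _) (mem_univ (0:ℝ)) (by simp [M])
  have h2 := this (mem_univ (2 * Real.pi))
  simp only [M] at h2
  have e1 : Complex.exp (((2 * Real.pi : ℝ) : ℂ) * Complex.I) = 1 := by
    push_cast; exact Complex.exp_two_pi_mul_I
  rw [e1] at h2
  simp at h2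
  exact h2

def DPHasLog (K : Set ℂ) (a b : ℂ) : Prop :=
  ∃ f : ℂ → ℂ, ContinuousOn f K ∧ (∀ z ∈ K, Complex.exp (f z) = (z - a) / (z - b)) ∧
    Tendsto f (cocompact ℂ ⊓ 𝓟 K) (𝓝 0)

lemma dp_comp_closed {X : Type*} [TopologicalSpace X] [LocallyConnectedSpace X] {O : Set X}
    (hO : IsOpen O) {a q : X} (hq : q ∈ O) (hcl : q ∈ closure (connectedComponentIn O a)) :
    q ∈ connectedComponentIn O a := by
  have hop := hO.connectedComponentIn (x := q)
  obtain ⟨y, hy1, hy2⟩ := mem_closure_iff.1 hcl _ hop (mem_connectedComponentIn hq)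
  rw [connectedComponentIn_eq hy2, ← connectedComponentIn_eq hy1]
  exact mem_connectedComponentIn hq

lemma dp_borsuk' {K : Set ℂ} (hK : IsClosed K) {a b c : ℂ} (ha : a ∉ K) (hb : b ∉ K) (hc : c ∉ K)
    (hab : b ∉ connectedComponentIn Kᶜ a) (hac : c ∉ connectedComponentIn Kᶜ a) (k m : ℤ)
    {f : ℂ → ℂ} (hf : ContinuousOn f K)
    (hfe : ∀ z ∈ K, Complex.exp (f z) = ((z - a) / (z - b)) ^ k * ((z - c) / (z - b)) ^ m)
    (hlim : Tendsto f (cocompact ℂ ⊓ 𝓟 K) (𝓝 0)) : k = 0 := by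
  classical
  set W := connectedComponentIn Kᶜ a with hWdef
  have hKo : IsOpen Kᶜ := hK.isOpen_compl
  have hWo : IsOpen W := hKo.connectedComponentIn
  have haW : a ∈ W := mem_connectedComponentIn ha
  have hWK : W ⊆ Kᶜ := connectedComponentIn_subset _ _
  have hne : a - b ≠ 0 := fun h => hab (by rw [← sub_eq_zero.1 h]; exact haW)
  have hbcl : b ∉ closure W := fun h => hab (dp_comp_closed hKo hb h)
  set W' : Set ℂ := {w | w ≠ 0 ∧ b + w⁻¹ ∈ W} with hW'
  have hcontT : ∀ w : ℂ, w ≠ 0 → ContinuousAt (fun w : ℂ => b + w⁻¹) w := fun w hw =>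
    continuousAt_const.add (continuousAt_inv₀ hw)
  have hW'o : IsOpen W' := by
    rw [isOpen_iff_mem_nhds]
    rintro w ⟨hw, hw2⟩
    exact Filter.inter_mem (isOpen_ne.mem_nhds hw) ((hcontT w hw).preimage_mem_nhds (hWo.mem_nhds hw2))
  obtain ⟨r, hr, hrW⟩ := Metric.mem_nhds_iff.1 (isClosed_closure.isOpen_compl.mem_nhds hbcl)
  have hW'b : Bornology.IsBounded W' := by
    refine (Metric.isBounded_closedBall (x := (0:ℂ)) (r := r⁻¹)).subset ?_
    rintro w ⟨hw, hw2⟩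
    have : b + w⁻¹ ∉ Metric.ball b r := fun h => hrW h (subset_closure hw2)
    simp [norm_inv] at this
    simpa using (le_inv_comm₀ hr (norm_pos_iff.2 hw)).1 this
  have hfr : ∀ w ∈ frontier W', w ≠ 0 → b + w⁻¹ ∈ K := by
    intro w hw h0
    rw [hW'o.frontier_eq] at hw
    have h1 : b + w⁻¹ ∈ closure W := by
      refine (hcontT w h0).continuousWithinAt.mem_closure hw.1 ?_
      intro x hx; exact hx.2
    have h2 : b + w⁻¹ ∉ W := fun h => hw.2 ⟨h0, h⟩
    by_contra h3
    exact h2 (dp_comp_closed hKo h3 h1)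
  set g : ℂ → ℂ := fun w => if w = 0 then 0 else f (b + w⁻¹) with hg
  have hgc : ContinuousOn g (frontier W') := by
    intro w hw
    by_cases h0 : w = 0
    · subst h0
      rw [Metric.continuousWithinAt_iff]
      intro ε hε
      have hlim' := (hlim (Metric.ball_mem_nhds 0 hε))
      rw [mem_map, mem_inf_principal, ← Metric.cobounded_eq_cocompact] at hlim'
      obtain ⟨R, -, hR⟩ := (Metric.hasBasis_cobounded_compl_closedBall b).mem_iff.1 hlim'
      refine ⟨(|R| + 1)⁻¹, by positivity, ?_⟩
      intro x hx hxd
      by_cases hx0 : x = 0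
      · simp [hg, hx0, hε]
      · have h1 : b + x⁻¹ ∈ (Metric.closedBall b R)ᶜ := by
          simp only [mem_compl_iff, Metric.mem_closedBall, dist_eq_norm, add_sub_cancel_left,
            norm_inv, not_le]
          rw [dist_zero_right] at hxd
          have := (lt_inv_comm₀ (norm_pos_iff.2 hx0) (by positivity)).1 hxd
          linarith [le_abs_self R]
        have := hR h1 (hfr x hx hx0)
        simpa [hg, hx0] using this
    · have h1 : ContinuousWithinAt (fun w => f (b + w⁻¹)) (frontier W' ∩ {0}ᶜ) w := by
        refine ContinuousWithinAt.comp (t := K) (hf _ (hfr w hw h0)) 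
          (hcontT w h0).continuousWithinAt ?_
        rintro x ⟨hx, hx0⟩
        exact hfr x hx hx0
      have h2 : ContinuousWithinAt (fun w => f (b + w⁻¹)) (frontier W') w := by
        exact (continuousWithinAt_inter (isOpen_compl_singleton.mem_nhds h0)).1 h1
      refine h2.congr_of_eventuallyEq ?_ (by simp [hg, h0])
      filter_upwards [mem_nhdsWithin_of_mem_nhds (isOpen_ne.mem_nhds h0)] with x hx
      simp only [hg]; rw [if_neg hx]
  obtain ⟨gt, hgt⟩ := ContinuousMap.exists_restrict_eq (isClosed_frontier (s := W'))
    ⟨(frontier W').domRestrict g, continuousOn_iff_continuous_domRestrict.1 hgc⟩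
  have hgt' : ∀ w ∈ frontier W', gt w = g w := fun w hw => 
    congrArg (fun F : C(frontier W', ℂ) => F ⟨w, hw⟩) hgt
  have hcne : ∀ w ∈ closure W', 1 + (b - c) * w ≠ 0 := by
    intro w hw h
    have hw0 : w ≠ 0 := by rintro rfl; simp at h
    have e : b + w⁻¹ = c := by field_simp; linear_combination h
    by_cases hww : w ∈ W'
    · exact hac (e ▸ hww.2)
    · refine hc (e ▸ hfr w ?_ hw0)
      rw [hW'o.frontier_eq]; exact ⟨hw, hww⟩
  refine dp_degree hW'o hW'b (c := (a - b)⁻¹) ⟨inv_ne_zero hne, by simpa using haW⟩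
    (G := fun w => Complex.exp (gt w) * (1 + (b - c) * w) ^ (-m) * ((b - a) ^ k)⁻¹) ?_ ?_ k ?_
  · refine ContinuousOn.mul (ContinuousOn.mul (by fun_prop) ?_) continuousOn_const
    exact ContinuousOn.zpow₀ (by fun_prop) _ fun w hw => Or.inl (hcne w hw)
  · intro w hw
    have : b - a ≠ 0 := by rw [← neg_sub]; exact neg_ne_zero.2 hne
    exact mul_ne_zero (mul_ne_zero (Complex.exp_ne_zero _) (zpow_ne_zero _ (hcne w hw)))
      (inv_ne_zero (zpow_ne_zero _ this))
  · intro w hw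
    have hba : b - a ≠ 0 := by rw [← neg_sub]; exact neg_ne_zero.2 hne
    have hcw := hcne w (frontier_subset_closure hw)
    have e1 : w - (a - b)⁻¹ = (1 + (b - a) * w) / (b - a) := by
      rw [← neg_sub b a]; field_simp; ring
    rw [hgt' w hw, e1, div_zpow, ← div_eq_mul_inv]
    congr 1
    by_cases h0 : w = 0
    · simp [hg, h0]
    · simp only [hg, if_neg h0]
      rw [hfe _ (hfr w hw h0), zpow_neg]
      have e2 : (b + w⁻¹ - a) / (b + w⁻¹ - b) = 1 + (b - a) * w := by field_simp; ring
      have e3 : (b + w⁻¹ - c) / (b + w⁻¹ - b) = 1 + (b - c) * w := by field_simp; ring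
      rw [e2, e3, mul_assoc, mul_inv_cancel₀ (zpow_ne_zero _ hcw), mul_one]

lemma dp_borsuk {K : Set ℂ} (hK : IsClosed K) {a b : ℂ} (ha : a ∉ K) (hb : b ∉ K)
    (h : DPHasLog K a b) : b ∈ connectedComponentIn Kᶜ a := by
  by_contra hab
  obtain ⟨f, hf, hfe, hlim⟩ := h
  have := dp_borsuk' hK ha hb hb hab hab 1 0 hf (fun z hz => by simp [hfe z hz]) hlim
  simp at this


lemma dp_mem_comp_symm {X : Type*} [TopologicalSpace X] {O : Set X} {a b : X}
    (h : b ∈ connectedComponentIn O a) : a ∈ connectedComponentIn O b := by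
  rw [← connectedComponentIn_eq h]
  exact mem_connectedComponentIn (connectedComponentIn_nonempty_iff.1 ⟨b, h⟩)

lemma dp_mem_comp_trans {X : Type*} [TopologicalSpace X] {O : Set X} {a b c : X}
    (h : b ∈ connectedComponentIn O a) (h' : c ∈ connectedComponentIn O b) :
    c ∈ connectedComponentIn O a := by
  rwa [connectedComponentIn_eq h]

lemma dp_farlog (x y : ℂ) : ∃ F : ℂ → ℂ, ContinuousOn F {z | ‖x - y‖ < ‖z - x‖} ∧
    (∀ z, ‖x - y‖ < ‖z - x‖ → Complex.exp (F z) = (z - x) / (z - y)) ∧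
    Tendsto F (cocompact ℂ) (𝓝 0) := by
  have hs : ∀ z : ℂ, ‖x - y‖ < ‖z - x‖ → 1 + (x - y) / (z - x) ∈ Complex.slitPlane := by
    intro z hz
    apply Complex.mem_slitPlane_of_norm_lt_one
    rw [norm_div, div_lt_one (lt_of_le_of_lt (norm_nonneg _) hz)]
    exact hz
  have hne : ∀ z : ℂ, ‖x - y‖ < ‖z - x‖ → z - x ≠ 0 := fun z hz =>
    norm_pos_iff.1 (lt_of_le_of_lt (norm_nonneg _) hz)
  refine ⟨fun z => - Complex.log (1 + (x - y) / (z - x)), ?_, ?_, ?_⟩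
  · refine ContinuousOn.neg (ContinuousOn.clog ?_ fun z hz => hs z hz)
    exact continuousOn_const.add (continuousOn_const.div (by fun_prop) fun z hz => hne z hz)
  · intro z hz
    rw [Complex.exp_neg, Complex.exp_log (Complex.slitPlane_ne_zero (hs z hz))]
    have h1 := hne z hz
    have : 1 + (x - y) / (z - x) = (z - y) / (z - x) := by field_simp; ring
    rw [this, inv_div]
  · have h1 : Tendsto (fun z : ℂ => (x - y) / (z - x)) (cocompact ℂ) (𝓝 0) := by
      have h2 : Tendsto (fun z : ℂ => z - x) (cocompact ℂ) (cocompact ℂ) :=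
        (Homeomorph.subRight x).isClosedEmbedding.tendsto_cocompact
      have h3 : Tendsto (fun z : ℂ => (z - x)⁻¹) (cocompact ℂ) (𝓝 0) := by
        rw [← Metric.cobounded_eq_cocompact] at h2 ⊢
        exact tendsto_inv₀_cobounded.comp h2
      simpa [div_eq_mul_inv] using h3.const_mul (x - y)
    have h4 : Tendsto (fun z : ℂ => - Complex.log (1 + (x - y) / (z - x))) (cocompact ℂ)
        (𝓝 (- Complex.log (1 + 0))) :=
      ((h1.const_add 1).clog (by simp)).neg
    simpa using h4

lemma DPHasLog.trans {K : Set ℂ} {a b c : ℂ} (hb : b ∉ K) (h : DPHasLog K a b)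
    (h' : DPHasLog K b c) : DPHasLog K a c := by
  obtain ⟨f, hf, hfe, hfl⟩ := h
  obtain ⟨g, hg, hge, hgl⟩ := h'
  refine ⟨fun z => f z + g z, hf.add hg, ?_, by simpa using hfl.add hgl⟩
  intro z hz
  have : z - b ≠ 0 := fun h => hb (by rw [← sub_eq_zero.1 h]; exact hz)
  rw [Complex.exp_add, hfe z hz, hge z hz, div_mul_div_cancel₀ this]

lemma DPHasLog.symm {K : Set ℂ} {a b : ℂ} (h : DPHasLog K a b) : DPHasLog K b a := by
  obtain ⟨f, hf, hfe, hfl⟩ := h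
  refine ⟨fun z => - f z, hf.neg, ?_, by simpa using hfl.neg⟩
  intro z hz
  rw [Complex.exp_neg, hfe z hz, inv_div]

lemma dp_haslog_local {K : Set ℂ} (hK : IsClosed K) {x : ℂ} (hx : x ∉ K) :
    ∃ r > 0, Metric.ball x r ⊆ Kᶜ ∧ ∀ y ∈ Metric.ball x r, DPHasLog K x y := by
  obtain ⟨r, hr, hrK⟩ := Metric.mem_nhds_iff.1 (hK.isOpen_compl.mem_nhds hx)
  refine ⟨r, hr, hrK, fun y hy => ?_⟩
  obtain ⟨F, h1, h2, h3⟩ := dp_farlog x y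
  have : ∀ z ∈ K, ‖x - y‖ < ‖z - x‖ := by
    intro z hz
    have h4 : z ∉ Metric.ball x r := fun h => hrK h hz
    rw [Metric.mem_ball, dist_eq_norm] at h4 hy
    rw [norm_sub_rev]
    linarith
  exact ⟨F, h1.mono this, fun z hz => h2 z (this z hz), h3.mono_left inf_le_left⟩

lemma dp_borsuk_conv {K : Set ℂ} (hK : IsClosed K) {a b : ℂ} (ha : a ∉ K)
    (h : b ∈ connectedComponentIn Kᶜ a) : DPHasLog K a b := by
  have hu : IsOpen {z | z ∉ K ∧ DPHasLog K a z} := by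
    rw [isOpen_iff_mem_nhds]
    rintro z ⟨hz, hl⟩
    obtain ⟨r, hr, hrK, h2⟩ := dp_haslog_local hK hz
    filter_upwards [Metric.ball_mem_nhds z hr] with y hy
    exact ⟨hrK hy, hl.trans hz (h2 y hy)⟩
  have hv : IsOpen {z | z ∉ K ∧ ¬ DPHasLog K a z} := by
    rw [isOpen_iff_mem_nhds]
    rintro z ⟨hz, hl⟩
    obtain ⟨r, hr, hrK, h2⟩ := dp_haslog_local hK hz
    filter_upwards [Metric.ball_mem_nhds z hr] with y hy
    exact ⟨hrK hy, fun h3 => hl (h3.trans (hrK hy) (h2 y hy).symm)⟩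
  have haa : DPHasLog K a a := by
    obtain ⟨r, hr, hrK, h2⟩ := dp_haslog_local hK ha
    exact h2 a (Metric.mem_ball_self hr)
  have := isPreconnected_connectedComponentIn.subset_left_of_subset_union hu hv
    (Set.disjoint_left.2 fun z h1 h2 => h2.2 h1.2)
    (fun z hz => by
      have hzK : z ∉ K := connectedComponentIn_subset _ _ hz
      by_cases h : DPHasLog K a z
      · exact Or.inl ⟨hzK, h⟩
      · exact Or.inr ⟨hzK, h⟩)
    ⟨a, mem_connectedComponentIn (F := Kᶜ) ha, ha, haa⟩
  exact (this h).2

lemma dp_tail {u ℓ : ℝ → ℂ} (hu : Continuous u) (hℓ : Continuous ℓ)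
    (he : ∀ t, Complex.exp (ℓ t) = u t)
    (hlim : Tendsto u atTop (𝓝 1)) :
    ∃ n : ℤ, Tendsto ℓ atTop (𝓝 (n * (2 * Real.pi * Complex.I))) := by
  have h1 : ∀ᶠ t in atTop, u t ∈ Complex.slitPlane :=
    hlim (Complex.isOpen_slitPlane.mem_nhds (by simp))
  obtain ⟨T, hT⟩ := eventually_atTop.1 h1
  have h2 := dp_log_unique (isPreconnected_Ici (a := T)) (f := ℓ)
    (g := fun t => Complex.log (u t) + (ℓ T - Complex.log (u T))) hℓ.continuousOn
    ((hu.continuousOn.clog fun t ht => hT t ht).add continuousOn_const)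
    (fun t ht => by
      rw [Complex.exp_add, Complex.exp_sub, he, he,
        Complex.exp_log (Complex.slitPlane_ne_zero (hT t ht)),
        Complex.exp_log (Complex.slitPlane_ne_zero (hT T le_rfl)), div_self, mul_one]
      exact Complex.slitPlane_ne_zero (hT T le_rfl)) (self_mem_Ici (a := T)) (by ring)
  have h3 : Complex.exp (ℓ T - Complex.log (u T)) = 1 := by
    rw [Complex.exp_sub, he, Complex.exp_log (Complex.slitPlane_ne_zero (hT T le_rfl)), div_self]
    exact Complex.slitPlane_ne_zero (hT T le_rfl)
  obtain ⟨n, hn⟩ := Complex.exp_eq_one_iff.1 h3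
  refine ⟨n, ?_⟩
  rw [← hn]
  have h4 : Tendsto (fun t => Complex.log (u t) + (ℓ T - Complex.log (u T))) atTop
      (𝓝 (Complex.log 1 + (ℓ T - Complex.log (u T)))) :=
    (hlim.clog (by simp)).add_const _
  simp only [Complex.log_one, zero_add] at h4
  refine h4.congr' ?_
  filter_upwards [eventually_ge_atTop T] with t ht
  exact (h2 ht).symm

/-- `ℓ` is a logarithm of `(φ - a)/(φ - b)` along the arc `φ`, with winding number `n`. -/
def DPLine (φ : ℝ → ℂ) (a b : ℂ) (ℓ : ℝ → ℂ) (n : ℤ) : Prop :=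
  Continuous ℓ ∧ (∀ t, Complex.exp (ℓ t) = (φ t - a) / (φ t - b)) ∧
    Tendsto ℓ atTop (𝓝 0) ∧ Tendsto ℓ atBot (𝓝 (n * (2 * Real.pi * Complex.I)))

lemma dp_ratio_lim (a b : ℂ) : Tendsto (fun z => (z - a) / (z - b)) (cocompact ℂ) (𝓝 1) := by
  obtain ⟨F, h1, h2, h3⟩ := dp_farlog a b
  have h4 : Tendsto (fun z => Complex.exp (F z)) (cocompact ℂ) (𝓝 1) := by
    simpa using h3.cexp
  refine h4.congr' ?_
  rw [← Metric.cobounded_eq_cocompact]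
  filter_upwards [(Metric.hasBasis_cobounded_compl_closedBall a).mem_of_mem 
    (i := ‖a - b‖) trivial] with z hz
  apply h2
  simpa [dist_eq_norm] using hz

lemma dp_line_exists {φ : ℝ → ℂ} (hφ : IsClosedEmbedding φ) {a b : ℂ} (ha : a ∉ range φ)
    (hb : b ∉ range φ) : ∃ ℓ n, DPLine φ a b ℓ n := by
  have hna : ∀ t, φ t - a ≠ 0 := fun t h => ha ⟨t, sub_eq_zero.1 h⟩
  have hnb : ∀ t, φ t - b ≠ 0 := fun t h => hb ⟨t, sub_eq_zero.1 h⟩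
  have hc := hφ.continuous
  have hu : Continuous fun t => (φ t - a) / (φ t - b) :=
    (hc.sub continuous_const).div (hc.sub continuous_const) hnb
  obtain ⟨ℓ, hℓ, hℓe⟩ := dp_exists_log hu (fun t => div_ne_zero (hna t) (hnb t))
  have hlim : Tendsto (fun t => (φ t - a) / (φ t - b)) (cocompact ℝ) (𝓝 1) :=
    (dp_ratio_lim a b).comp hφ.tendsto_cocompact
  rw [cocompact_eq_atBot_atTop] at hlim
  obtain ⟨n, hn⟩ := dp_tail hu hℓ hℓe (hlim.mono_left le_sup_right)
  obtain ⟨m, hm⟩ := dp_tail (hu.comp continuous_neg) (hℓ.comp continuous_neg) (fun t => hℓe (-t))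
    ((hlim.mono_left le_sup_left).comp tendsto_neg_atTop_atBot)
  have hm' : Tendsto ℓ atBot (𝓝 (m * (2 * Real.pi * Complex.I))) := by
    have := hm.comp tendsto_neg_atBot_atTop
    simpa [Function.comp_def] using this
  refine ⟨fun t => ℓ t - n * (2 * Real.pi * Complex.I), m - n, by fun_prop, ?_, ?_, ?_⟩
  · intro t
    rw [Complex.exp_sub, hℓe, Complex.exp_int_mul_two_pi_mul_I, div_one]
  · simpa using hn.sub_const (n * (2 * Real.pi * Complex.I))
  · have := hm'.sub_const (n * (2 * Real.pi * Complex.I))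
    push_cast
    rwa [sub_mul]

lemma dp_inverse {φ : ℝ → ℂ} (hφ : IsClosedEmbedding φ) : ∃ ψ : ℂ → ℝ, Continuous ψ ∧
    (∀ t, ψ (φ t) = t) ∧
    ∀ S : Set ℝ, Tendsto ψ (cocompact ℂ ⊓ 𝓟 (φ '' S)) (cocompact ℝ ⊓ 𝓟 S) := by
  obtain ⟨ψ, hψ⟩ := ContinuousMap.exists_extension hφ (ContinuousMap.id ℝ)
  have hinv : ∀ t, ψ (φ t) = t := fun t => congrArg (fun F : C(ℝ, ℝ) => F t) hψ
  refine ⟨ψ, ψ.continuous, hinv, fun S => ?_⟩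
  rw [tendsto_inf]
  constructor
  · intro s hs
    obtain ⟨C, hC, hCs⟩ := mem_cocompact.1 hs
    rw [mem_map, mem_inf_principal]
    filter_upwards [(hC.image hφ.continuous).compl_mem_cocompact] with z hz
    rintro ⟨t, -, rfl⟩
    rw [mem_preimage, hinv]
    exact hCs fun h => hz ⟨t, h, rfl⟩
  · rw [tendsto_principal]
    filter_upwards [mem_inf_of_right (mem_principal_self _)] with z hz
    obtain ⟨t, ht, rfl⟩ := hz
    rwa [hinv]

lemma dp_push {φ : ℝ → ℂ} (hφ : IsClosedEmbedding φ) {S : Set ℝ} {ℓ : ℝ → ℂ}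
    (hℓ : ContinuousOn ℓ S) (hlim : Tendsto ℓ (cocompact ℝ ⊓ 𝓟 S) (𝓝 0)) :
    ∃ f : ℂ → ℂ, ContinuousOn f (φ '' S) ∧ (∀ t, f (φ t) = ℓ t) ∧
      Tendsto f (cocompact ℂ ⊓ 𝓟 (φ '' S)) (𝓝 0) := by
  obtain ⟨ψ, h1, h2, h3⟩ := dp_inverse hφ
  refine ⟨fun z => ℓ (ψ z), hℓ.comp h1.continuousOn ?_, fun t => by simp only [h2],
    hlim.comp (h3 S)⟩
  rintro _ ⟨t, ht, rfl⟩
  rwa [h2]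

lemma dp_push_log {φ : ℝ → ℂ} (hφ : IsClosedEmbedding φ) {S : Set ℝ} {ℓ : ℝ → ℂ} {a b : ℂ}
    (hℓ : ContinuousOn ℓ S) (hlim : Tendsto ℓ (cocompact ℝ ⊓ 𝓟 S) (𝓝 0))
    (he : ∀ t ∈ S, Complex.exp (ℓ t) = (φ t - a) / (φ t - b)) : DPHasLog (φ '' S) a b := by
  obtain ⟨f, h1, h2, h3⟩ := dp_push hφ hℓ hlim
  refine ⟨f, h1, ?_, h3⟩
  rintro _ ⟨t, ht, rfl⟩
  rw [h2, he t ht]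

lemma dp_uniq {S : Set ℝ} (hS : IsPreconnected S) {l : Filter ℝ} [l.NeBot] (hl : S ∈ l)
    {f g : ℝ → ℂ} (hf : ContinuousOn f S)
    (hg : ContinuousOn g S) (he : ∀ t ∈ S, Complex.exp (f t) = Complex.exp (g t))
    (hfl : Tendsto f l (𝓝 0)) (hgl : Tendsto g l (𝓝 0)) : EqOn f g S := by
  obtain ⟨t₀, ht₀⟩ := l.nonempty_of_mem hl
  have h1 := dp_log_unique hS hf (g := fun t => g t + (f t₀ - g t₀)) (hg.add continuousOn_const)
    (fun t ht => by
      rw [Complex.exp_add, Complex.exp_sub, he t ht, he t₀ ht₀, div_self, mul_one]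
      exact Complex.exp_ne_zero _) ht₀ (by ring)
  have h2 : Tendsto f l (𝓝 (0 + (f t₀ - g t₀))) := by
    refine (hgl.add_const _).congr' ?_
    filter_upwards [hl] with t ht
    exact (h1 ht).symm
  have h3 := tendsto_nhds_unique hfl h2
  intro t ht
  rw [h1 ht]
  simp only
  linear_combination -h3

lemma dp_line_zero {φ : ℝ → ℂ} (hφ : IsClosedEmbedding φ) {a b : ℂ} (ha : a ∉ range φ)
    (hb : b ∉ range φ) {ℓ : ℝ → ℂ} (h : DPLine φ a b ℓ 0) :
    b ∈ connectedComponentIn (range φ)ᶜ a := by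
  refine dp_borsuk hφ.isClosed_range ha hb ?_
  rw [← image_univ]
  refine dp_push_log hφ h.1.continuousOn ?_ fun t _ => h.2.1 t
  rw [principal_univ, inf_top_eq, cocompact_eq_atBot_atTop, tendsto_sup]
  exact ⟨by simpa using h.2.2.2, h.2.2.1⟩

lemma dp_line_of_comp {φ : ℝ → ℂ} (hφ : IsClosedEmbedding φ) {a b : ℂ} (ha : a ∉ range φ)
    (h : b ∈ connectedComponentIn (range φ)ᶜ a) : ∃ ℓ, DPLine φ a b ℓ 0 := by
  obtain ⟨f, h1, h2, h3⟩ := dp_borsuk_conv hφ.isClosed_range ha h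
  have h4 : Tendsto φ (cocompact ℝ) (cocompact ℂ ⊓ 𝓟 (range φ)) :=
    tendsto_inf.2 ⟨hφ.tendsto_cocompact, tendsto_principal.2 (Eventually.of_forall mem_range_self)⟩
  have h5 := h3.comp h4
  rw [cocompact_eq_atBot_atTop, tendsto_sup] at h5
  refine ⟨f ∘ φ, h1.comp_continuous hφ.continuous mem_range_self, fun t => h2 _ ⟨t, rfl⟩, h5.2, ?_⟩
  simpa using h5.1

lemma dp_two_sides {φ : ℝ → ℂ} (hφ : IsClosedEmbedding φ) {a b c : ℂ} (ha : a ∉ range φ)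
    (hb : b ∉ range φ) (hc : c ∉ range φ) (hab : b ∉ connectedComponentIn (range φ)ᶜ a)
    (hac : c ∉ connectedComponentIn (range φ)ᶜ a) : c ∈ connectedComponentIn (range φ)ᶜ b := by
  by_contra hbc
  obtain ⟨ℓ, n, h⟩ := dp_line_exists hφ ha hb
  obtain ⟨ℓ', m, h'⟩ := dp_line_exists hφ hc hb
  have hm : m ≠ 0 := by
    rintro rfl
    exact hbc (dp_mem_comp_symm (dp_line_zero hφ hc hb h'))
  obtain ⟨f, h1, h2, h3⟩ := dp_push hφ (S := univ) (ℓ := fun t => m * ℓ t - n * ℓ' t)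
    ((continuous_const.mul h.1).sub (continuous_const.mul h'.1)).continuousOn (by
      rw [principal_univ, inf_top_eq, cocompact_eq_atBot_atTop, tendsto_sup]
      constructor
      · have := (h.2.2.2.const_mul (m:ℂ)).sub (h'.2.2.2.const_mul (n:ℂ))
        convert this using 2
        ring
      · simpa using (h.2.2.1.const_mul (m:ℂ)).sub (h'.2.2.1.const_mul (n:ℂ)))
  rw [image_univ] at h1 h3
  refine hm (dp_borsuk' hφ.isClosed_range ha hb hc hab hac m (-n) h1 ?_ h3)
  rintro _ ⟨t, rfl⟩
  rw [h2, Complex.exp_sub, Complex.exp_int_mul, Complex.exp_int_mul, h.2.1, h'.2.1, zpow_neg]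
  rfl

lemma dp_gap {φ : ℝ → ℂ} (hφ : IsClosedEmbedding φ) {a b : ℂ} (ha : a ∉ range φ)
    (hb : b ∉ range φ) {s t : ℝ} (hst : s < t) : 
    b ∈ connectedComponentIn (φ '' (Ioo s t)ᶜ)ᶜ a := by
  obtain ⟨ℓ, n, h⟩ := dp_line_exists hφ ha hb
  refine dp_borsuk (hφ.isClosedMap _ isOpen_Ioo.isClosed_compl) 
    (fun h => ha (image_subset_range _ _ h)) (fun h => hb (image_subset_range _ _ h)) ?_
  have hS : (Ioo s t)ᶜ = Iic s ∪ Ici t := by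
    ext x; simp only [mem_compl_iff, mem_Ioo, mem_union, mem_Iic, mem_Ici, not_and_or, not_lt]
  refine dp_push_log hφ (ℓ := fun x => if x ≤ s then ℓ x - n * (2 * Real.pi * Complex.I) else ℓ x)
    ?_ ?_ ?_
  · rw [hS]
    refine ContinuousOn.union_of_isClosed ?_ ?_ isClosed_Iic isClosed_Ici
    · refine (h.1.sub (continuous_const (y := n * (2 * Real.pi * Complex.I)))).continuousOn.congr fun x hx => ?_
      simp only [mem_Iic] at hx
      simp [hx]
    · refine h.1.continuousOn.congr fun x hx => ?_
      simp only [mem_Ici] at hx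
      simp [not_le.2 (lt_of_lt_of_le hst hx)]
  · refine Tendsto.mono_left ?_ inf_le_left
    rw [cocompact_eq_atBot_atTop, tendsto_sup]
    constructor
    · have := h.2.2.2.sub_const (n * (2 * Real.pi * Complex.I))
      rw [sub_self] at this
      refine this.congr' ?_
      filter_upwards [eventually_le_atBot s] with x hx
      simp [hx]
    · refine h.2.2.1.congr' ?_
      filter_upwards [eventually_gt_atTop s] with x hx
      simp [not_le.2 hx]
  · intro x _
    split_ifs
    · rw [Complex.exp_sub, h.2.1, Complex.exp_int_mul_two_pi_mul_I, div_one]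
    · exact h.2.1 x

lemma dp_boundary {φ : ℝ → ℂ} (hφ : IsClosedEmbedding φ) (hns : ¬ IsPreconnected (range φ)ᶜ)
    {w : ℂ} (hw : w ∉ range φ) (t₀ : ℝ) : φ t₀ ∈ closure (connectedComponentIn (range φ)ᶜ w) := by
  have hop : IsOpen (range φ)ᶜ := hφ.isClosed_range.isOpen_compl
  set W := connectedComponentIn (range φ)ᶜ w with hW
  obtain ⟨w', hw', hww'⟩ : ∃ w', w' ∉ range φ ∧ w' ∉ W := by
    by_contra hcon
    push Not at hcon
    apply hns
    have : (range φ)ᶜ = W := Subset.antisymm hcon (connectedComponentIn_subset _ _)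
    rw [this]
    exact isPreconnected_connectedComponentIn
  rw [mem_closure_iff]
  intro U hU hpU
  obtain ⟨ε, hε, hεU⟩ := Metric.mem_nhds_iff.1 (hφ.continuous.continuousAt.preimage_mem_nhds (hU.mem_nhds hpU))
  rw [Real.ball_eq_Ioo] at hεU
  have hg := dp_gap hφ hw hw' (s := t₀ - ε) (t := t₀ + ε) (by linarith)
  set K := φ '' (Ioo (t₀ - ε) (t₀ + ε))ᶜ with hK
  by_contra hne
  have hsub := isPreconnected_connectedComponentIn (F := Kᶜ) (x := w)
  have hWo : IsOpen W := hop.connectedComponentIn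
  have hwW : w ∈ W := mem_connectedComponentIn hw
  have hwK : w ∈ Kᶜ := fun h => hw (image_subset_range _ _ h)
  have := hsub.subset_left_of_subset_union hWo isClosed_closure.isOpen_compl (v := (closure W)ᶜ)
    (Set.disjoint_left.2 fun z h1 h2 => h2 (subset_closure h1)) (fun z hz => by
      by_cases h1 : z ∈ closure W
      · left
        by_cases h2 : z ∈ range φ
        · exfalso
          obtain ⟨t, rfl⟩ := h2
          have ht : t ∈ Ioo (t₀ - ε) (t₀ + ε) := by
            by_contra ht
            exact connectedComponentIn_subset _ _ hz ⟨t, ht, rfl⟩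
          obtain ⟨y, hy1, hy2⟩ := mem_closure_iff.1 h1 U hU (hεU ht)
          exact hne ⟨y, hy1, hy2⟩
        · exact dp_comp_closed hop h2 h1
      · right; exact h1)
    ⟨w, mem_connectedComponentIn hwK, hwW⟩
  exact hww' (this hg)


lemma dp_glue {ι : Type*} [Finite ι] {K : ι → Set ℂ} (hK : ∀ i, IsClosed (K i)) {f : ι → ℂ → ℂ}
    (hf : ∀ i, ContinuousOn (f i) (K i))
    (hl : ∀ i, Tendsto (f i) (cocompact ℂ ⊓ 𝓟 (K i)) (𝓝 0))
    (hag : ∀ i j z, z ∈ K i → z ∈ K j → f i z = f j z) :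
    ∃ g : ℂ → ℂ, ContinuousOn g (⋃ i, K i) ∧ (∀ i, ∀ z ∈ K i, g z = f i z) ∧
      Tendsto g (cocompact ℂ ⊓ 𝓟 (⋃ i, K i)) (𝓝 0) := by
  classical
  set g : ℂ → ℂ := fun z => if h : ∃ i, z ∈ K i then f h.choose z else 0 with hg
  have hgi : ∀ i, ∀ z ∈ K i, g z = f i z := by
    intro i z hz
    have h : ∃ i, z ∈ K i := ⟨i, hz⟩
    simp only [hg, dif_pos h]
    exact hag _ _ _ h.choose_spec hz
  refine ⟨g, ?_, hgi, ?_⟩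
  · exact (locallyFinite_of_finite K).continuousOn_iUnion hK fun i => (hf i).congr (hgi i)
  · intro s hs
    have : ∀ i, ∀ᶠ z in cocompact ℂ, z ∈ K i → f i z ∈ s := by
      intro i
      have := hl i hs
      rwa [mem_map, mem_inf_principal] at this
    rw [mem_map, mem_inf_principal]
    filter_upwards [eventually_all.2 this] with z hz hzK
    obtain ⟨i, hi⟩ := mem_iUnion.1 hzK
    rw [mem_preimage, hgi i z hi]
    exact hz i hi

lemma dp_local {φ : ℝ → ℂ} (hφ : IsClosedEmbedding φ) (t₀ : ℝ) {r : ℝ} (hr : 0 < r) :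
    ∃ δ > 0, δ ≤ r ∧ ∀ x ∈ Metric.ball (φ t₀) δ, ∀ y ∈ Metric.ball (φ t₀) δ, x ∉ range φ →
      y ∉ range φ → y ∈ connectedComponentIn (range φ)ᶜ x →
        y ∈ connectedComponentIn (Metric.ball (φ t₀) r \ range φ) x := by
  set p := φ t₀ with hp
  obtain ⟨ε, hε, hεU⟩ := Metric.mem_nhds_iff.1
    (hφ.continuous.continuousAt.preimage_mem_nhds (Metric.ball_mem_nhds p hr))
  rw [Real.ball_eq_Ioo] at hεU
  have hKc : IsClosed (φ '' (Ioo (t₀ - ε) (t₀ + ε))ᶜ) :=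
    hφ.isClosedMap _ isOpen_Ioo.isClosed_compl
  have hpK : p ∉ φ '' (Ioo (t₀ - ε) (t₀ + ε))ᶜ := by
    rintro ⟨t, ht, hte⟩
    rw [hφ.injective hte] at ht
    exact ht ⟨by linarith, by linarith⟩
  obtain ⟨η, hη, hηK⟩ := Metric.mem_nhds_iff.1 (hKc.isOpen_compl.mem_nhds hpK)
  set δ := min η r / 3 with hδ
  have hm : 0 < min η r := lt_min hη hr
  have h3η : 3 * δ ≤ η := by linarith [min_le_left η r]
  have h3r : 3 * δ ≤ r := by linarith [min_le_right η r]
  have hδ0 : 0 < δ := by positivity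
  refine ⟨δ, hδ0, by linarith, ?_⟩
  intro x hx y hy hxσ hyσ hxy
  obtain ⟨ℓ, hℓ⟩ := dp_line_of_comp hφ hxσ hxy
  obtain ⟨F, hF1, hF2, hF3⟩ := dp_farlog x y
  have hfar : ∀ z, z ∉ Metric.ball p (3 * δ) → ‖x - y‖ < ‖z - x‖ := by
    intro z hz
    rw [← dist_eq_norm, ← dist_eq_norm]
    rw [Metric.mem_ball] at hx hy hz
    have h1 := dist_triangle_right x y p
    have h2 := dist_triangle z x p
    linarith
  have hfarφ : ∀ t, t ∉ Ioo (t₀ - ε) (t₀ + ε) → ‖x - y‖ < ‖φ t - x‖ := by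
    intro t ht
    apply hfar
    intro h
    exact hηK (Metric.ball_subset_ball h3η h) ⟨t, ht, rfl⟩
  have hlimF := hF3.comp hφ.tendsto_cocompact
  have hlimℓ : Tendsto ℓ (cocompact ℝ) (𝓝 0) := by
    rw [cocompact_eq_atBot_atTop, tendsto_sup]
    exact ⟨by simpa using hℓ.2.2.2, hℓ.2.2.1⟩
  have hlimF' := hlimF
  have hlimℓ' := hlimℓ
  rw [cocompact_eq_atBot_atTop, tendsto_sup] at hlimF' hlimℓ'
  have hgen : ∀ S : Set ℝ, IsPreconnected S → S ⊆ (Ioo (t₀ - ε) (t₀ + ε))ᶜ → 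
      ∀ l : Filter ℝ, l.NeBot → S ∈ l → Tendsto ℓ l (𝓝 0) → Tendsto (F ∘ φ) l (𝓝 0) → 
      EqOn ℓ (F ∘ φ) S := by
    intro S hS hSs l _ hSl h1 h2
    refine dp_uniq hS hSl hℓ.1.continuousOn
      (hF1.comp hφ.continuous.continuousOn fun t ht => hfarφ t (hSs ht)) ?_ h1 h2
    intro t ht
    rw [hℓ.2.1, Function.comp, hF2 _ (hfarφ t (hSs ht))]
  have hagree : ∀ t, t ∉ Ioo (t₀ - ε) (t₀ + ε) → ℓ t = F (φ t) := by
    intro t ht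
    rw [mem_Ioo, not_and_or, not_lt, not_lt] at ht
    rcases ht with ht | ht
    · exact hgen (Iic (t₀ - ε)) isPreconnected_Iic
        (fun u hu h => absurd h.1 (not_lt.2 hu)) atBot inferInstance (Iic_mem_atBot _)
        hlimℓ'.1 hlimF'.1 ht
    · exact hgen (Ici (t₀ + ε)) isPreconnected_Ici
        (fun u hu h => absurd h.2 (not_lt.2 hu)) atTop inferInstance (Ici_mem_atTop _)
        hlimℓ'.2 hlimF'.2 ht
  obtain ⟨f, hf1, hf2, hf3⟩ := dp_push hφ (S := univ) (ℓ := ℓ) hℓ.1.continuousOn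
    (hlimℓ.mono_left inf_le_left)
  rw [image_univ] at hf1 hf3
  have hag : ∀ z, z ∈ range φ → z ∉ Metric.ball p r → f z = F z := by
    rintro _ ⟨t, rfl⟩ ht
    rw [hf2]
    exact hagree t fun h => ht (hεU h)
  obtain ⟨g, hg1, hg2, hg3⟩ := dp_glue (ι := Bool)
    (K := fun i => if i then range φ else (Metric.ball p r)ᶜ) (f := fun i => if i then f else F)
    (by
      rintro (_ | _)
      · simp
      · simpa using hφ.isClosed_range)
    (by
      rintro (_ | _)
      · simp only [Bool.false_eq_true, if_false]
        exact hF1.mono fun z hz => hfar z fun h => hz (Metric.ball_subset_ball h3r h)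
      · simpa using hf1)
    (by
      rintro (_ | _)
      · simpa using hF3.mono_left inf_le_left
      · simpa using hf3)
    (by
      rintro (_ | _) (_ | _) z hz hz'
      · rfl
      · simpa using (hag z (by simpa using hz') (by simpa using hz)).symm
      · simpa using (hag z (by simpa using hz) (by simpa using hz'))
      · rfl)
  have hU : (⋃ i : Bool, if i then range φ else (Metric.ball p r)ᶜ) =
      (Metric.ball p r \ range φ)ᶜ := by
    ext z
    simp only [mem_iUnion, Bool.exists_bool, if_true, Bool.false_eq_true, if_false, mem_compl_iff,
      Set.mem_sdiff]
    tauto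
  rw [hU] at hg1 hg3
  have hop : IsOpen (Metric.ball p r \ range φ) := Metric.isOpen_ball.sdiff hφ.isClosed_range
  have hsub : Metric.ball p δ ⊆ Metric.ball p r := Metric.ball_subset_ball (by linarith)
  have := dp_borsuk (K := (Metric.ball p r \ range φ)ᶜ) hop.isClosed_compl (a := x) (b := y)
    (fun h => h ⟨hsub hx, hxσ⟩) (fun h => h ⟨hsub hy, hyσ⟩) ⟨g, hg1, ?_, hg3⟩
  · rwa [compl_compl] at this
  · intro z hz
    by_cases h : z ∈ range φ
    · obtain ⟨t, rfl⟩ := h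
      rw [hg2 true (φ t) (by simp)]
      simp only [if_true]
      rw [hf2, hℓ.2.1]
    · have hz' : z ∉ Metric.ball p r := fun h' => hz ⟨h', h⟩
      rw [hg2 false z (by simpa using hz')]
      simp only [Bool.false_eq_true, if_false]
      exact hF2 z (hfar z fun h => hz' (Metric.ball_subset_ball h3r h))

lemma dp_other_side {φ : ℝ → ℂ} (hns : ¬ IsPreconnected (range φ)ᶜ) (w : ℂ) :
    ∃ w', w' ∉ range φ ∧ w' ∉ connectedComponentIn (range φ)ᶜ w := by
  by_contra hcon
  push Not at hcon
  apply hns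
  have : (range φ)ᶜ = connectedComponentIn (range φ)ᶜ w := 
    Subset.antisymm hcon (connectedComponentIn_subset _ _)
  rw [this]
  exact isPreconnected_connectedComponentIn

lemma dp_cross_agree {φ χ : ℝ → ℂ} (hφ : IsClosedEmbedding φ) (hχ : IsClosedEmbedding χ)
    (hns : ¬ IsPreconnected (range φ)ᶜ) {s₀ t₀ : ℝ} (hst : φ s₀ = χ t₀)
    (hmeet : ∀ s t, φ s = χ t → χ t = χ t₀) (hcr : CrossesAt (range φ) (range χ) (χ t₀))
    {a b : ℂ} (ha : a ∉ range φ) (hab : b ∈ connectedComponentIn (range φ)ᶜ a)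
    {ℓ ℓ' : ℝ → ℂ} (h : DPLine φ a b ℓ 0) (h' : DPLine χ a b ℓ' 0) : ℓ s₀ = ℓ' t₀ := by
  have hop : IsOpen (range φ)ᶜ := hφ.isClosed_range.isOpen_compl
  set W := connectedComponentIn (range φ)ᶜ a with hW
  have hWo : IsOpen W := hop.connectedComponentIn
  have haW : a ∈ W := mem_connectedComponentIn ha
  have hWs : W ⊆ (range φ)ᶜ := connectedComponentIn_subset _ _
  have hin : ∀ C : Set ℂ, IsPreconnected C → C ⊆ (range φ)ᶜ → (C ∩ W).Nonempty → C ⊆ W := by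
    rintro C hC hCs ⟨x, hx, hxW⟩
    rw [hW, connectedComponentIn_eq hxW]
    exact hC.subset_connectedComponentIn hx hCs
  have hoff : ∀ t, t ≠ t₀ → χ t ∉ range φ := by
    rintro t ht ⟨s, hs⟩
    exact ht (hχ.injective (hmeet s t hs))
  have hhalf : ∀ H : Set ℝ, IsPreconnected H → t₀ ∉ H → 
      (∀ t ∈ H, χ t ∉ W) ∨ ∀ t ∈ H, χ t ∈ W := by
    intro H hH ht
    by_contra hcon
    push Not at hcon
    obtain ⟨⟨t, htH, htW⟩, t', htH', htW'⟩ := hcon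
    refine htW' (hin _ (hH.image χ hχ.continuous.continuousOn) ?_ ⟨χ t, ⟨t, htH, rfl⟩, htW⟩
      ⟨t', htH', rfl⟩)
    rintro _ ⟨u, hu, rfl⟩
    exact hoff u fun h => ht (h ▸ hu)
  have hhalves : (∀ t ∈ Ioi t₀, χ t ∉ W) ∨ (∀ t ∈ Iio t₀, χ t ∉ W) := by
    rcases hhalf (Ioi t₀) isPreconnected_Ioi (by simp) with h1 | h1
    · exact Or.inl h1
    rcases hhalf (Iio t₀) isPreconnected_Iio (by simp) with h2 | h2
    · exact Or.inr h2
    exfalso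
    obtain ⟨-, -, hV⟩ := hcr
    obtain ⟨V, hVn, -, C₁, C₂, hVC, -, hC1, hC2, hn1, hn2⟩ := hV univ univ_mem
    have hCW : ∀ C : Set ℂ, IsPreconnected C → C ⊆ V \ range φ → (range χ ∩ C).Nonempty → C ⊆ W := by
      rintro C hC hCs ⟨_, ⟨t, rfl⟩, htC⟩
      refine hin C hC (fun x hx => (hCs hx).2) ⟨χ t, htC, ?_⟩
      rcases lt_trichotomy t t₀ with hlt | heq | hgt
      · exact h2 t hlt
      · exact absurd ⟨s₀, by rw [hst, heq]⟩ (hCs htC).2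
      · exact h1 t hgt
    have hVW : V \ range φ ⊆ W := by
      rw [hVC]
      exact union_subset (hCW C₁ hC1 (hVC ▸ subset_union_left) hn1) 
        (hCW C₂ hC2 (hVC ▸ subset_union_right) hn2)
    obtain ⟨w', hw', hw'W⟩ := dp_other_side hns a
    have hcl := dp_boundary hφ hns hw' s₀
    rw [hst] at hcl
    obtain ⟨y, hyV, hyW⟩ := mem_closure_iff_nhds.1 hcl V hVn
    have hyW2 := hVW ⟨hyV, connectedComponentIn_subset _ _ hyW⟩
    exact hw'W (dp_mem_comp_trans hyW2 (dp_mem_comp_symm hyW))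
  have hbc : b ∈ connectedComponentIn (Wᶜ)ᶜ a := by
    rw [compl_compl]
    exact isPreconnected_connectedComponentIn.subset_connectedComponentIn haW subset_rfl hab
  obtain ⟨F, hF1, hF2, hF3⟩ := dp_borsuk_conv (K := Wᶜ) hWo.isClosed_compl (fun h => h haW) hbc
  have hφW : ∀ s, φ s ∈ Wᶜ := fun s hs => hWs hs ⟨s, rfl⟩
  have e1 : ℓ s₀ = F (φ s₀) := by
    refine dp_uniq (S := univ) isPreconnected_univ (l := atTop) univ_mem h.1.continuousOn
      (g := F ∘ φ) (hF1.comp hφ.continuous.continuousOn fun s _ => hφW s) ?_ h.2.2.1 ?_ (mem_univ s₀)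
    · intro t _
      rw [h.2.1, Function.comp, hF2 _ (hφW t)]
    · refine hF3.comp (tendsto_inf.2 ⟨hφ.tendsto_cocompact.mono_left ?_, 
        tendsto_principal.2 (Eventually.of_forall hφW)⟩)
      rw [cocompact_eq_atBot_atTop]; exact le_sup_right
  have hgen : ∀ S : Set ℝ, IsPreconnected S → t₀ ∈ S → (∀ t ∈ S, χ t ∈ Wᶜ) → 
      ∀ l : Filter ℝ, l.NeBot → l ≤ cocompact ℝ → S ∈ l → Tendsto ℓ' l (𝓝 0) → 
      ℓ' t₀ = F (χ t₀) := by
    intro S hS htS hSW l _ hl hSl hlim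
    refine dp_uniq (S := S) hS hSl h'.1.continuousOn
      (g := F ∘ χ) (hF1.comp hχ.continuous.continuousOn hSW) ?_ hlim ?_ htS
    · intro t ht
      rw [h'.2.1, Function.comp, hF2 _ (hSW t ht)]
    · refine hF3.comp (tendsto_inf.2 ⟨hχ.tendsto_cocompact.mono_left hl, 
        tendsto_principal.2 ?_⟩)
      filter_upwards [hSl] with t ht using hSW t ht
  have hpW : χ t₀ ∈ Wᶜ := hst ▸ hφW s₀
  rw [e1, hst]
  symm
  rcases hhalves with hh | hh
  · refine hgen (Ici t₀) isPreconnected_Ici self_mem_Ici ?_ atTop inferInstance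
      (by rw [cocompact_eq_atBot_atTop]; exact le_sup_right) (Ici_mem_atTop _) h'.2.2.1
    intro t ht
    rcases eq_or_lt_of_le (mem_Ici.1 ht) with heq | hlt
    · rwa [← heq]
    · exact hh t hlt
  · refine hgen (Iic t₀) isPreconnected_Iic self_mem_Iic ?_ atBot inferInstance
      (by rw [cocompact_eq_atBot_atTop]; exact le_sup_left) (Iic_mem_atBot _) 
      (by simpa using h'.2.2.2)
    intro t ht
    rcases eq_or_lt_of_le (mem_Iic.1 ht) with heq | hlt
    · rwa [heq]
    · exact hh t hlt

/-- The hypotheses on the family of arcs, in parametrised form. -/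
structure DPFam {ι : Type*} (φ : ι → ℝ → ℂ) : Prop where
  emb : ∀ i, IsClosedEmbedding (φ i)
  sep : ∀ i, ¬ IsPreconnected (range (φ i))ᶜ
  meet : ∀ i j, i ≠ j → (range (φ i) ∩ range (φ j)).Subsingleton
  cross : ∀ i j, i ≠ j → ∀ p ∈ range (φ i) ∩ range (φ j), CrossesAt (range (φ i)) (range (φ j)) p

lemma dp_nonsep {ι : Type*} [Finite ι] {φ : ι → ℝ → ℂ} (hφ : DPFam φ) {P : Set ℂ}
    (hP : P.Finite) {a b : ℂ} (ha : ∀ i, a ∉ range (φ i)) (hb : ∀ i, b ∉ range (φ i))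
    (haP : a ∉ P) (hbP : b ∉ P) (hab : ∀ i, b ∈ connectedComponentIn (range (φ i))ᶜ a) :
    b ∈ connectedComponentIn ((⋃ i, range (φ i)) ∪ P)ᶜ a := by
  classical
  choose ℓ hℓ using fun i => dp_line_of_comp (hφ.emb i) (ha i) (hab i)
  have hlimℓ : ∀ i, Tendsto (ℓ i) (cocompact ℝ) (𝓝 0) := by
    intro i
    rw [cocompact_eq_atBot_atTop, tendsto_sup]
    exact ⟨by simpa using (hℓ i).2.2.2, (hℓ i).2.2.1⟩
  choose f hf1 hf2 hf3 using fun i => dp_push (hφ.emb i) (S := univ) (ℓ := ℓ i)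
    (hℓ i).1.continuousOn ((hlimℓ i).mono_left inf_le_left)
  simp only [image_univ] at hf1 hf3
  have hag : ∀ i j z, z ∈ range (φ i) → z ∈ range (φ j) → f i z = f j z := by
    intro i j z hzi hzj
    by_cases hij : i = j
    · rw [hij]
    have hcr := hφ.cross i j hij z ⟨hzi, hzj⟩
    obtain ⟨s, rfl⟩ := hzi
    obtain ⟨t, ht⟩ := hzj
    rw [hf2, ← ht, hf2]
    refine dp_cross_agree (hφ.emb i) (hφ.emb j) (hφ.sep i) ht.symm ?_ (ht ▸ hcr) (ha i) (hab i)
      (hℓ i) (hℓ j)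
    intro s' t' hst
    exact hφ.meet i j hij ⟨⟨s', hst⟩, ⟨t', rfl⟩⟩ ⟨⟨s, ht.symm⟩, ⟨t, rfl⟩⟩
  set P' := P \ ⋃ i, range (φ i) with hP'
  have hP'f : P'.Finite := hP.subset sdiff_subset
  obtain ⟨g, hg1, hg2, hg3⟩ := dp_glue (ι := Option ι)
    (K := fun o => o.elim P' fun i => range (φ i))
    (f := fun o => o.elim (fun z => Complex.log ((z - a) / (z - b))) f)
    (by
      rintro (_ | i)
      · exact hP'f.isClosed
      · exact (hφ.emb i).isClosed_range)
    (by
      rintro (_ | i)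
      · exact hP'f.continuousOn _
      · exact hf1 i)
    (by
      rintro (_ | i)
      · have : cocompact ℂ ⊓ 𝓟 P' = ⊥ := by
          rw [inf_principal_eq_bot]
          exact hP'f.isCompact.compl_mem_cocompact
        simp only [Option.elim]
        rw [this]
        exact tendsto_bot
      · exact hf3 i)
    (by
      rintro (_ | i) (_ | j) z hz hz'
      · rfl
      · exact absurd (mem_iUnion.2 ⟨j, hz'⟩) hz.2
      · exact absurd (mem_iUnion.2 ⟨i, hz⟩) hz'.2
      · exact hag i j z hz hz')
  have hU : (⋃ o : Option ι, o.elim P' fun i => range (φ i)) = (⋃ i, range (φ i)) ∪ P := by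
    rw [iUnion_option]
    simp only [Option.elim, hP', sdiff_union_self, union_comm P]
  rw [hU] at hg1 hg3
  refine dp_borsuk ((isClosed_iUnion_of_finite fun i => (hφ.emb i).isClosed_range).union hP.isClosed)
    ?_ ?_ ⟨g, hg1, ?_, hg3⟩
  · simp only [mem_union, mem_iUnion, not_or, not_exists]; exact ⟨ha, haP⟩
  · simp only [mem_union, mem_iUnion, not_or, not_exists]; exact ⟨hb, hbP⟩
  · intro z hz
    rw [← hU] at hz
    obtain ⟨o, ho⟩ := mem_iUnion.1 hz
    rw [hg2 o z ho]
    rcases o with _ | i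
    · simp only [Option.elim]
      rw [Complex.exp_log]
      refine div_ne_zero ?_ ?_
      · exact fun h => haP (by rw [← sub_eq_zero.1 h]; exact ho.1)
      · exact fun h => hbP (by rw [← sub_eq_zero.1 h]; exact ho.1)
    · obtain ⟨t, rfl⟩ := ho
      simp only [Option.elim]
      rw [hf2, (hℓ i).2.1]


/-- `S` is a simple arc from `a` to `b` (possibly degenerate). -/
def DPA (S : Set ℂ) (a b : ℂ) : Prop :=
  ∃ (u v : ℝ) (f : ℝ → ℂ), u ≤ v ∧ ContinuousOn f (Icc u v) ∧ InjOn f (Icc u v) ∧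
    f u = a ∧ f v = b ∧ f '' Icc u v = S

lemma DPA.refl (a : ℂ) : DPA {a} a a :=
  ⟨0, 0, fun _ => a, le_rfl, continuousOn_const, by simp, rfl, rfl, by simp⟩

lemma DPA.left {S : Set ℂ} {a b : ℂ} (h : DPA S a b) : a ∈ S := by
  obtain ⟨u, v, f, huv, -, -, rfl, -, rfl⟩ := h
  exact ⟨u, left_mem_Icc.2 huv, rfl⟩

lemma DPA.right {S : Set ℂ} {a b : ℂ} (h : DPA S a b) : b ∈ S := by
  obtain ⟨u, v, f, huv, -, -, -, rfl, rfl⟩ := h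
  exact ⟨v, right_mem_Icc.2 huv, rfl⟩

lemma DPA.isCompact {S : Set ℂ} {a b : ℂ} (h : DPA S a b) : IsCompact S := by
  obtain ⟨u, v, f, huv, hc, -, -, -, rfl⟩ := h
  exact isCompact_Icc.image_of_continuousOn hc

lemma DPA.isPreconnected {S : Set ℂ} {a b : ℂ} (h : DPA S a b) : IsPreconnected S := by
  obtain ⟨u, v, f, huv, hc, -, -, -, rfl⟩ := h
  exact isPreconnected_Icc.image _ hc

lemma DPA.symm {S : Set ℂ} {a b : ℂ} (h : DPA S a b) : DPA S b a := by
  obtain ⟨u, v, f, huv, hc, hi, rfl, rfl, rfl⟩ := h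
  have hm : MapsTo (fun t : ℝ => -t) (Icc (-v) (-u)) (Icc u v) := by
    intro t ht
    exact ⟨by linarith [ht.2], by linarith [ht.1]⟩
  refine ⟨-v, -u, fun t => f (-t), by linarith, hc.comp continuous_neg.continuousOn hm, ?_,
    by simp, by simp, ?_⟩
  · intro s hs t ht hst
    exact neg_injective (hi (hm hs) (hm ht) hst)
  · ext z
    constructor
    · rintro ⟨t, ht, rfl⟩
      exact ⟨-t, hm ht, rfl⟩
    · rintro ⟨t, ht, rfl⟩
      exact ⟨-t, ⟨by linarith [ht.2], by linarith [ht.1]⟩, by simp⟩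

lemma DPA.unit {S : Set ℂ} {a b : ℂ} (h : DPA S a b) (hab : a ≠ b) :
    ∃ f : ℝ → ℂ, ContinuousOn f (Icc 0 1) ∧ InjOn f (Icc 0 1) ∧ f 0 = a ∧ f 1 = b ∧
      f '' Icc 0 1 = S := by
  obtain ⟨u, v, f, huv, hc, hi, rfl, rfl, rfl⟩ := h
  have hlt : u < v := lt_of_le_of_ne huv fun h => hab (by rw [h])
  have hm : MapsTo (fun t : ℝ => u + t * (v - u)) (Icc 0 1) (Icc u v) := by
    intro t ht
    have h1 := ht.1
    have h2 := ht.2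
    constructor
    · simp only; nlinarith
    · simp only; nlinarith
  refine ⟨fun t => f (u + t * (v - u)), hc.comp (by fun_prop) hm, ?_, by simp, by simp, ?_⟩
  · intro s hs t ht hst
    have := hi (hm hs) (hm ht) hst
    have h3 : s * (v - u) = t * (v - u) := by simpa using this
    exact mul_right_cancel₀ (sub_pos.2 hlt).ne' h3
  · ext z
    constructor
    · rintro ⟨t, ht, rfl⟩
      exact ⟨_, hm ht, rfl⟩
    · rintro ⟨t, ht, rfl⟩
      have hp := sub_pos.2 hlt
      refine ⟨(t - u) / (v - u), ⟨div_nonneg (by linarith [ht.1]) hp.le,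
        (div_le_one hp).2 (by linarith [ht.2])⟩, ?_⟩
      simp only
      rw [div_mul_cancel₀ _ hp.ne']
      congr 1
      ring

lemma DPA.split {S : Set ℂ} {a b y : ℂ} (h : DPA S a b) (hy : y ∈ S) :
    ∃ S₁ S₂, DPA S₁ a y ∧ DPA S₂ y b ∧ S₁ ∪ S₂ = S ∧ S₁ ∩ S₂ ⊆ {y} := by
  obtain ⟨u, v, f, huv, hc, hi, rfl, rfl, rfl⟩ := h
  obtain ⟨t, ht, rfl⟩ := hy
  have h1 : Icc u t ⊆ Icc u v := Icc_subset_Icc_right ht.2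
  have h2 : Icc t v ⊆ Icc u v := Icc_subset_Icc_left ht.1
  refine ⟨f '' Icc u t, f '' Icc t v, ⟨u, t, f, ht.1, hc.mono h1, hi.mono h1, rfl, rfl, rfl⟩,
    ⟨t, v, f, ht.2, hc.mono h2, hi.mono h2, rfl, rfl, rfl⟩, ?_, ?_⟩
  · rw [← image_union, Icc_union_Icc_eq_Icc ht.1 ht.2]
  · rintro _ ⟨⟨s, hs, rfl⟩, s', hs', he⟩
    have := hi (h2 hs') (h1 hs) he
    subst this
    rw [le_antisymm hs.2 hs'.1]
    rfl

lemma DPA.first {S T : Set ℂ} {a b : ℂ} (h : DPA S a b) (hT : IsClosed T)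
    (hST : (S ∩ T).Nonempty) :
    ∃ R y, DPA R a y ∧ R ⊆ S ∧ y ∈ T ∧ R ∩ T ⊆ {y} := by
  obtain ⟨u, v, f, huv, hc, hi, rfl, rfl, rfl⟩ := h
  have hK : IsCompact (Icc u v ∩ f ⁻¹' T) :=
    isCompact_Icc.of_isClosed_subset (hc.preimage_isClosed_of_isClosed isClosed_Icc hT)
      inter_subset_left
  have hne : (Icc u v ∩ f ⁻¹' T).Nonempty := by
    obtain ⟨_, ⟨t, ht, rfl⟩, htT⟩ := hST
    exact ⟨t, ht, htT⟩
  obtain ⟨t, ⟨ht, htT⟩, hmin⟩ := hK.exists_isLeast hne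
  have h1 : Icc u t ⊆ Icc u v := Icc_subset_Icc_right ht.2
  refine ⟨f '' Icc u t, f t, ⟨u, t, f, ht.1, hc.mono h1, hi.mono h1, rfl, rfl, rfl⟩,
    image_mono h1, htT, ?_⟩
  rintro _ ⟨⟨s, hs, rfl⟩, hsT⟩
  rw [le_antisymm hs.2 (hmin ⟨h1 hs, hsT⟩)]
  rfl

lemma DPA.concat {S T : Set ℂ} {a b c : ℂ} (h : DPA S a b) (h' : DPA T b c)
    (hST : S ∩ T ⊆ {b}) : DPA (S ∪ T) a c := by
  obtain ⟨u, v, f, huv, hc, hi, rfl, rfl, rfl⟩ := h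
  obtain ⟨u', v', g, huv', hc', hi', hgu, rfl, rfl⟩ := h'
  set F : ℝ → ℂ := fun t => if t ≤ v then f t else g (t - v + u') with hF
  have e1 : EqOn F f (Icc u v) := fun t ht => by simp only [hF, if_pos ht.2]
  have e2 : EqOn F (fun t => g (t - v + u')) (Icc v (v + (v' - u'))) := by
    intro t ht
    rcases eq_or_lt_of_le ht.1 with he | hlt
    · subst he
      simp [hF, hgu]
    · simp only [hF, if_neg (not_le.2 hlt)]
  have hm : MapsTo (fun t : ℝ => t - v + u') (Icc v (v + (v' - u'))) (Icc u' v') := by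
    intro t ht
    exact ⟨by linarith [ht.1], by linarith [ht.2]⟩
  have hU : Icc u v ∪ Icc v (v + (v' - u')) = Icc u (v + (v' - u')) :=
    Icc_union_Icc_eq_Icc huv (by linarith)
  have i2 : F '' Icc v (v + (v' - u')) = g '' Icc u' v' := by
    rw [e2.image_eq]
    ext z
    constructor
    · rintro ⟨t, ht, rfl⟩
      exact ⟨_, hm ht, rfl⟩
    · rintro ⟨t, ht, rfl⟩
      exact ⟨t + v - u', ⟨by linarith [ht.1], by linarith [ht.2]⟩, by simp only; congr 1; ring⟩
  have hi2 : InjOn F (Icc v (v + (v' - u'))) := by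
    intro s hs t ht hst
    rw [e2 hs, e2 ht] at hst
    have := hi' (hm hs) (hm ht) hst
    linarith
  have hi1 : InjOn F (Icc u v) := hi.congr e1.symm
  have hFv : F v = f v := e1 (right_mem_Icc.2 huv)
  have key : ∀ s ∈ Icc u v, ∀ t ∈ Icc v (v + (v' - u')), F s = F t → s = t := by
    intro s hs t ht hst
    have hmem : F s ∈ f '' Icc u v ∩ g '' Icc u' v' := by
      refine ⟨⟨s, hs, (e1 hs).symm⟩, ?_⟩
      rw [hst, ← i2]
      exact ⟨t, ht, rfl⟩
    have h1 : F s = f v := hST hmem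
    rw [← hFv] at h1
    have h2 : s = v := hi1 hs (right_mem_Icc.2 huv) h1
    have h3 : t = v := hi2 ht (left_mem_Icc.2 (by linarith)) (hst.symm.trans h1)
    rw [h2, h3]
  refine ⟨u, v + (v' - u'), F, by linarith, ?_, ?_, e1 (left_mem_Icc.2 huv), ?_, ?_⟩
  · rw [← hU]
    exact (hc.congr e1).union_of_isClosed ((hc'.comp (by fun_prop) hm).congr e2) isClosed_Icc
      isClosed_Icc
  · rw [← hU]
    rintro s (hs | hs) t (ht | ht) hst
    · exact hi1 hs ht hst
    · exact key s hs t ht hst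
    · exact (key t ht s hs hst.symm).symm
    · exact hi2 hs ht hst
  · rw [e2 (right_mem_Icc.2 (by linarith))]
    simp
  · rw [← hU, image_union, e1.image_eq, i2]

lemma DPA.trans {S T : Set ℂ} {a b c : ℂ} (h : DPA S a b) (h' : DPA T b c) :
    ∃ R ⊆ S ∪ T, DPA R a c := by
  obtain ⟨R, y, hR, hRS, hyT, hRT⟩ := h.first h'.isCompact.isClosed ⟨b, h.right, h'.left⟩
  obtain ⟨T₁, T₂, -, h2, hT, -⟩ := h'.split hyT
  have hT2 : T₂ ⊆ T := hT ▸ subset_union_right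
  exact ⟨R ∪ T₂, union_subset_union hRS hT2,
    hR.concat h2 ((inter_subset_inter_right _ hT2).trans hRT)⟩

lemma DPA.segment (x y : ℂ) : DPA (segment ℝ x y) x y := by
  by_cases hxy : x = y
  · subst hxy
    rw [segment_same]
    exact DPA.refl x
  refine ⟨0, 1, fun t => AffineMap.lineMap x y t, zero_le_one,
    (AffineMap.lineMap_continuous).continuousOn, ?_, by simp, by simp, ?_⟩
  · exact (AffineMap.lineMap_injective ℝ hxy).injOn
  · rw [segment_eq_image_lineMap]

lemma dp_arc_conn {O : Set ℂ} (hO : IsOpen O) {a b : ℂ} (h : b ∈ connectedComponentIn O a) :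
    ∃ S ⊆ connectedComponentIn O a, DPA S a b := by
  set C := connectedComponentIn O a with hC
  have hCo : IsOpen C := hO.connectedComponentIn
  have haC : a ∈ C := by
    rw [hC]
    exact mem_connectedComponentIn (by
      by_contra hne
      rw [hC, connectedComponentIn_eq_empty hne] at h
      exact h)
  refine IsPreconnected.induction₂ (s := C) isPreconnected_connectedComponentIn
    (fun x y => ∃ S ⊆ C, DPA S x y) ?_ ?_ ?_ haC h
  · intro x hx
    obtain ⟨ε, hε, hεC⟩ := Metric.isOpen_iff.1 hCo x hx
    refine nhdsWithin_le_nhds ?_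
    filter_upwards [Metric.ball_mem_nhds x hε] with y hy
    exact ⟨_, ((convex_ball x ε).segment_subset (Metric.mem_ball_self hε) hy).trans hεC,
      DPA.segment x y⟩
  · rintro x y z - - - ⟨S, hS, h1⟩ ⟨T, hT, h2⟩
    obtain ⟨R, hR, h3⟩ := h1.trans h2
    exact ⟨R, hR.trans (union_subset hS hT), h3⟩
  · rintro x y - - ⟨S, hS, h1⟩
    exact ⟨S, hS, h1.symm⟩


lemma dp_ray {y : ℕ → ℂ} {P : ℕ → Set ℂ} {p : ℂ} (hP : ∀ n, DPA (P n) (y n) (y (n + 1)))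
    (hy : ∀ n, y n ≠ y (n + 1)) (h1 : ∀ n, P n ∩ P (n + 1) ⊆ {y (n + 1)})
    (h2 : ∀ n m, n + 2 ≤ m → P n ∩ P m = ∅) (hp : ∀ n, p ∉ P n)
    (hlim : ∀ ε > 0, ∃ N, ∀ n ≥ N, P n ⊆ Metric.ball p ε) :
    ∃ S ⊆ {p} ∪ ⋃ n, P n, DPA S (y 0) p := by
  choose h hc hi h0 hh1 him using fun n => (hP n).unit (hy n)
  set G : ℝ → ℂ := fun t => h ⌊t⌋₊ (t - ⌊t⌋₊) with hG
  have hfr : ∀ t : ℝ, 0 ≤ t → t - ⌊t⌋₊ ∈ Icc (0 : ℝ) 1 := by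
    intro t ht
    exact ⟨by linarith [Nat.floor_le ht], by linarith [Nat.lt_floor_add_one t]⟩
  have hGP : ∀ t : ℝ, 0 ≤ t → G t ∈ P ⌊t⌋₊ := by
    intro t ht
    rw [← him]
    exact ⟨_, hfr t ht, rfl⟩
  have e : ∀ n : ℕ, EqOn G (fun t => h n (t - n)) (Icc (n : ℝ) (n + 1)) := by
    intro n t ht
    have ht0 : (0 : ℝ) ≤ t := le_trans (Nat.cast_nonneg n) ht.1
    rcases eq_or_lt_of_le ht.2 with he | hlt
    · have : ⌊t⌋₊ = n + 1 := by
        rw [he]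
        exact_mod_cast Nat.floor_natCast (n + 1)
      simp only [hG, this]
      rw [he]
      simp [h0, hh1]
    · have : ⌊t⌋₊ = n := (Nat.floor_eq_iff ht0).2 ⟨ht.1, hlt⟩
      simp only [hG, this]
  have hcN : ∀ N : ℕ, ContinuousOn G (Icc (0 : ℝ) N) := by
    intro N
    induction N with
    | zero => simp
    | succ N ih =>
      have : Icc (0 : ℝ) N ∪ Icc (N : ℝ) (N + 1) = Icc (0 : ℝ) ((N + 1 : ℕ) : ℝ) := by
        push_cast
        exact Icc_union_Icc_eq_Icc (Nat.cast_nonneg N) (by linarith)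
      rw [← this]
      refine ih.union_of_isClosed (ContinuousOn.congr ?_ (e N)) isClosed_Icc isClosed_Icc
      refine (hc N).comp (by fun_prop) ?_
      intro t ht
      exact ⟨by linarith [ht.1], by linarith [ht.2]⟩
  have hcG : ContinuousOn G (Ici 0) := by
    intro t ht
    obtain ⟨N, hN⟩ := exists_nat_gt t
    refine (hcN N t ⟨ht, hN.le⟩).mono_of_mem_nhdsWithin ?_
    filter_upwards [self_mem_nhdsWithin, nhdsWithin_le_nhds (Iio_mem_nhds hN)] with s hs hs'
    exact ⟨hs, le_of_lt hs'⟩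
  have hiG' : ∀ s t : ℝ, 0 ≤ s → 0 ≤ t → ⌊s⌋₊ ≤ ⌊t⌋₊ → G s = G t → s = t := by
    intro s t hs ht hle hst
    rcases eq_or_lt_of_le hle with heq | hlt
    · have h3 : h ⌊s⌋₊ (s - ⌊s⌋₊) = h ⌊s⌋₊ (t - ⌊s⌋₊) := by
        have := hst
        simp only [hG] at this
        rwa [← heq] at this
      have := hi ⌊s⌋₊ (hfr s hs) (heq ▸ hfr t ht) h3
      linarith
    · exfalso
      rcases eq_or_lt_of_le (Nat.succ_le_of_lt hlt) with heq | hlt'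
      · have hmem : G s ∈ P ⌊s⌋₊ ∩ P (⌊s⌋₊ + 1) := by
          refine ⟨hGP s hs, ?_⟩
          have := hGP t ht
          rw [← heq, ← hst] at this
          exact this
        have h3 : h ⌊s⌋₊ (s - ⌊s⌋₊) = h ⌊s⌋₊ 1 := by
          rw [hh1]
          exact h1 _ hmem
        have := hi ⌊s⌋₊ (hfr s hs) (by simp) h3
        linarith [Nat.lt_floor_add_one s]
      · have hmem : G s ∈ P ⌊s⌋₊ ∩ P ⌊t⌋₊ := ⟨hGP s hs, hst ▸ hGP t ht⟩
        rw [h2 _ _ hlt'] at hmem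
        exact hmem
  have hiG : InjOn G (Ici 0) := by
    intro s hs t ht hst
    rcases le_total ⌊s⌋₊ ⌊t⌋₊ with hle | hle
    · exact hiG' s t hs ht hle hst
    · exact (hiG' t s ht hs hle hst.symm).symm
  set F : ℝ → ℂ := fun s => if s < 1 then G (s / (1 - s)) else p with hF
  have hpos : ∀ s ∈ Ico (0 : ℝ) 1, 0 ≤ s / (1 - s) := fun s hs =>
    div_nonneg hs.1 (by linarith [hs.2])
  have hF1 : F 1 = p := by simp [hF]
  have hFG : EqOn F (fun s => G (s / (1 - s))) (Ico 0 1) := by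
    intro s hs
    simp only [hF, if_pos hs.2]
  have hIco : ∀ s ∈ Icc (0 : ℝ) 1, s ∈ Ico (0 : ℝ) 1 ∨ s = 1 := by
    intro s hs
    rcases eq_or_lt_of_le hs.2 with h | h
    · exact Or.inr h
    · exact Or.inl ⟨hs.1, h⟩
  have hFP : ∀ s ∈ Ico (0 : ℝ) 1, F s ∈ P ⌊s / (1 - s)⌋₊ := by
    intro s hs
    rw [hFG hs]
    exact hGP _ (hpos s hs)
  refine ⟨F '' Icc 0 1, ?_, 0, 1, F, zero_le_one, ?_, ?_, ?_, hF1, rfl⟩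
  · rintro _ ⟨s, hs, rfl⟩
    rcases hIco s hs with hs | rfl
    · exact Or.inr (mem_iUnion.2 ⟨_, hFP s hs⟩)
    · exact Or.inl hF1
  · have hcI : ContinuousOn F (Ico 0 1) := by
      refine ContinuousOn.congr ?_ hFG
      refine hcG.comp (continuousOn_id.div (by fun_prop) ?_) hpos
      intro s hs
      have := hs.2
      exact (by linarith : (0 : ℝ) < 1 - s).ne'
    intro s hs
    rcases hIco s hs with hs | rfl
    · refine (hcI s hs).mono_of_mem_nhdsWithin ?_
      filter_upwards [self_mem_nhdsWithin, nhdsWithin_le_nhds (Iio_mem_nhds hs.2)] with t ht ht'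
      exact ⟨ht.1, ht'⟩
    · rw [ContinuousWithinAt, hF1, Metric.nhds_basis_ball.tendsto_right_iff]
      intro ε hε
      obtain ⟨N, hN⟩ := hlim ε hε
      have hN1 : (N : ℝ) / (N + 1) < 1 := by
        rw [div_lt_one (by positivity)]
        linarith
      filter_upwards [self_mem_nhdsWithin, nhdsWithin_le_nhds (Ioi_mem_nhds hN1)] with t ht ht'
      rcases hIco t ht with ht | rfl
      · refine hN _ ?_ (hFP t ht)
        apply Nat.le_floor
        have h3 : 0 < 1 - t := by linarith [ht.2]
        rw [le_div_iff₀ h3]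
        rw [mem_Ioi, div_lt_iff₀ (by positivity)] at ht'
        linarith
      · rw [hF1]
        exact Metric.mem_ball_self hε
  · intro s hs t ht hst
    rcases hIco s hs with hs | rfl <;> rcases hIco t ht with ht | rfl
    · rw [hFG hs, hFG ht] at hst
      have := hiG (hpos s hs) (hpos t ht) hst
      have h3 : 0 < 1 - t := by linarith [ht.2]
      have h4 : 0 < 1 - s := by linarith [hs.2]
      rw [div_eq_div_iff h4.ne' h3.ne'] at this
      linarith
    · exact absurd (hFP s hs) (by rw [hst, hF1]; exact hp _)
    · exact absurd (hFP t ht) (by rw [← hst, hF1]; exact hp _)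
    · rfl
  · have := hFG (left_mem_Ico.2 (zero_lt_one : (0 : ℝ) < 1))
    rw [this]
    simp [hG, h0]

/-- State of the recursive construction of an arc ending at a boundary point. -/
structure DPState (p : ℂ) (W : Set ℂ) (δ : ℝ → ℝ) where
  (y x : ℂ)
  A : Set ℂ
  η : ℝ
  hη : 0 < η
  hA : DPA A y x
  hAW : A ⊆ W
  hy : y ∉ Metric.ball p η
  hx : x ∈ Metric.ball p (δ η)

lemma dp_access_aux {p : ℂ} {W : Set ℂ} {δ : ℝ → ℝ} (hpW : p ∉ W)
    (hcl : p ∈ closure W) (hδ : ∀ η > 0, 0 < δ η)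
    (hloc : ∀ η > 0, ∀ x ∈ W ∩ Metric.ball p (δ η), ∀ y ∈ W ∩ Metric.ball p (δ η),
      ∃ S ⊆ W ∩ Metric.ball p η, DPA S x y) (s : DPState p W δ) :
    ∃ (s' : DPState p W δ) (P : Set ℂ), DPA P s.y s'.y ∧ s.y ≠ s'.y ∧ P ⊆ s.A ∧
      P ∩ s'.A ⊆ {s'.y} ∧ s'.A ⊆ Metric.ball p s.η ∧ s'.η ≤ s.η / 2 ∧
      s.A ∩ Metric.ball p s'.η = ∅ := by
  obtain ⟨ε, hε, hεA⟩ := Metric.mem_nhds_iff.1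
    (s.hA.isCompact.isClosed.isOpen_compl.mem_nhds (fun h => hpW (s.hAW h)))
  set η' := min ε (s.η / 2) with hη'
  have hpos : 0 < η' := lt_min hε (half_pos s.hη)
  have hball : ∃ x'' ∈ W, x'' ∈ Metric.ball p (δ η') ∧ x'' ∈ Metric.ball p (δ s.η) := by
    obtain ⟨x'', hb, hW⟩ := mem_closure_iff_nhds.1 hcl _ (inter_mem
      (Metric.ball_mem_nhds p (hδ η' hpos)) (Metric.ball_mem_nhds p (hδ s.η s.hη)))
    exact ⟨x'', hW, hb.1, hb.2⟩
  obtain ⟨x', hx'W, hx'1, hx'2⟩ := hball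
  obtain ⟨T, hT, hTa⟩ := hloc s.η s.hη s.x ⟨s.hAW s.hA.right, s.hx⟩ x' ⟨hx'W, hx'2⟩
  obtain ⟨P, y', hP, hPA, hyT, hPT⟩ := s.hA.first hTa.isCompact.isClosed
    ⟨s.x, s.hA.right, hTa.left⟩
  obtain ⟨T₁, T₂, -, h2, hTT, -⟩ := hTa.split hyT
  have hT2 : T₂ ⊆ T := hTT ▸ subset_union_right
  have hAd : ∀ z ∈ s.A, z ∉ Metric.ball p η' := fun z hz hzb =>
    hεA (Metric.ball_subset_ball (min_le_left _ _) hzb) hz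
  refine ⟨⟨y', x', T₂, η', hpos, h2, fun z hz => (hT (hT2 hz)).1, hAd _ (hPA hP.right), hx'1⟩,
    P, hP, ?_, hPA, (inter_subset_inter_right _ hT2).trans hPT, fun z hz => (hT (hT2 hz)).2,
    min_le_right _ _, ?_⟩
  · rintro h
    exact s.hy (h ▸ (hT hyT).2)
  · ext z
    simp only [mem_inter_iff, mem_empty_iff_false, iff_false, not_and]
    exact hAd z

lemma dp_access_abs {p : ℂ} {W : Set ℂ} {δ : ℝ → ℝ} (hpW : p ∉ W)
    (hcl : p ∈ closure W) (hδ : ∀ η > 0, 0 < δ η)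
    (hloc : ∀ η > 0, ∀ x ∈ W ∩ Metric.ball p (δ η), ∀ y ∈ W ∩ Metric.ball p (δ η),
      ∃ S ⊆ W ∩ Metric.ball p η, DPA S x y) {r : ℝ} (hr : 0 < r) :
    ∃ x ∈ W ∩ Metric.ball p r, ∃ S ⊆ {p} ∪ (W ∩ Metric.ball p r), DPA S x p := by
  obtain ⟨x₀, hx₀b, hx₀W⟩ := mem_closure_iff_nhds.1 hcl _ (inter_mem
      (Metric.ball_mem_nhds p (hδ r hr)) (Metric.ball_mem_nhds p hr))
  have hd : 0 < dist x₀ p := dist_pos.2 fun h => hpW (h ▸ hx₀W)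
  set η₁ := min r (dist x₀ p) with hη₁
  have hη₁0 : 0 < η₁ := lt_min hr hd
  obtain ⟨x₁, hx₁b, hx₁W⟩ := mem_closure_iff_nhds.1 hcl _ (inter_mem
      (Metric.ball_mem_nhds p (hδ r hr)) (Metric.ball_mem_nhds p (hδ η₁ hη₁0)))
  obtain ⟨A, hA, hAa⟩ := hloc r hr x₀ ⟨hx₀W, hx₀b.1⟩ x₁ ⟨hx₁W, hx₁b.1⟩
  let s₀ : DPState p W δ := ⟨x₀, x₁, A, η₁, hη₁0, hAa, fun z hz => (hA hz).1, by
    rw [Metric.mem_ball, not_lt]; exact min_le_right _ _, hx₁b.2⟩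
  choose nxt P hP hne hPA hPd hnb hnη hdis using dp_access_aux hpW hcl hδ hloc
  let s : ℕ → DPState p W δ := fun n => nxt^[n] s₀
  have hs : ∀ n, s (n + 1) = nxt (s n) := fun n => Function.iterate_succ_apply' nxt n s₀
  have hηpow : ∀ n, (s n).η ≤ r * (1 / 2) ^ n := by
    intro n
    induction n with
    | zero =>
      have h3 : s₀.η ≤ r := min_le_left _ _
      simpa [s] using h3
    | succ n ih =>
      rw [hs]
      have := hnη (s n)
      rw [pow_succ]
      linarith
  have hanti : Antitone fun n => (s n).η := antitone_nat_of_succ_le fun n => by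
    simp only [hs]
    have := hnη (s n)
    linarith [(s n).hη]
  have hAr : ∀ n, (s n).A ⊆ Metric.ball p r := by
    intro n
    rcases n with _ | n
    · exact fun z hz => (hA hz).2
    · rw [hs]
      refine (hnb (s n)).trans (Metric.ball_subset_ball ?_)
      refine (hanti (Nat.zero_le n)).trans ?_
      exact min_le_left _ _
  obtain ⟨S, hS, hSa⟩ := dp_ray (y := fun n => (s n).y) (P := fun n => P (s n)) (p := p)
    (fun n => by simp only [hs]; exact hP (s n)) (fun n => by simp only [hs]; exact hne (s n))
    (fun n => by
      simp only [hs]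
      exact (inter_subset_inter_right _ (hPA _)).trans (hPd (s n)))
    (fun n m hnm => by
      obtain ⟨k, rfl⟩ : ∃ k, m = n + 1 + k + 1 := ⟨m - n - 2, by omega⟩
      rw [eq_empty_iff_forall_notMem]
      rintro z ⟨hz1, hz2⟩
      have h3 : z ∈ Metric.ball p (s (n + 1 + k)).η := by
        have := hPA _ hz2
        rw [hs] at this
        exact hnb _ this
      have h4 : z ∈ Metric.ball p (nxt (s n)).η := by
        rw [← hs]
        exact Metric.ball_subset_ball (hanti (by omega)) h3
      have := hdis (s n)
      rw [eq_empty_iff_forall_notMem] at this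
      exact this z ⟨hPA _ hz1, h4⟩)
    (fun n h => hpW ((s n).hAW (hPA _ h)))
    (fun ε hε => by
      obtain ⟨N, hN⟩ := exists_pow_lt_of_lt_one (div_pos hε hr) (by norm_num : (1 / 2 : ℝ) < 1)
      refine ⟨N + 1, fun n hn => ?_⟩
      obtain ⟨k, rfl⟩ : ∃ k, n = k + 1 := ⟨n - 1, by omega⟩
      refine (hPA _).trans ?_
      rw [hs]
      refine (hnb (s k)).trans (Metric.ball_subset_ball ?_)
      refine (hanti (by omega : N ≤ k)).trans ((hηpow N).trans ?_)
      rw [lt_div_iff₀ hr] at hN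
      linarith)
  refine ⟨x₀, ⟨hx₀W, hx₀b.2⟩, S, hS.trans (union_subset_union_right _ ?_), hSa⟩
  refine iUnion_subset fun n z hz => ⟨(s n).hAW (hPA _ hz), hAr n (hPA _ hz)⟩

lemma dp_access {φ : ℝ → ℂ} (hφ : IsClosedEmbedding φ) (hns : ¬ IsPreconnected (range φ)ᶜ)
    {w : ℂ} (hw : w ∉ range φ) (t₀ : ℝ) {r : ℝ} (hr : 0 < r) :
    ∃ x ∈ connectedComponentIn (range φ)ᶜ w ∩ Metric.ball (φ t₀) r,
      ∃ S ⊆ {φ t₀} ∪ (connectedComponentIn (range φ)ᶜ w ∩ Metric.ball (φ t₀) r),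
        DPA S x (φ t₀) := by
  have hl : ∀ η : ℝ, ∃ δ, 0 < η → 0 < δ ∧ ∀ x ∈ Metric.ball (φ t₀) δ, ∀ y ∈ Metric.ball (φ t₀) δ,
      x ∉ range φ → y ∉ range φ → y ∈ connectedComponentIn (range φ)ᶜ x →
        y ∈ connectedComponentIn (Metric.ball (φ t₀) η \ range φ) x := by
    intro η
    by_cases hη : 0 < η
    · obtain ⟨δ, h1, -, h2⟩ := dp_local hφ t₀ hη
      exact ⟨δ, fun _ => ⟨h1, h2⟩⟩
    · exact ⟨0, fun h => absurd h hη⟩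
  choose δ hδ using hl
  have hsub := connectedComponentIn_subset (range φ)ᶜ w
  refine dp_access_abs (δ := δ) (fun h => hsub h ⟨t₀, rfl⟩) (dp_boundary hφ hns hw t₀)
    (fun η hη => (hδ η hη).1) ?_ hr
  rintro η hη x ⟨hxW, hxb⟩ y ⟨hyW, hyb⟩
  have hyx : y ∈ connectedComponentIn (range φ)ᶜ x := by
    rwa [← connectedComponentIn_eq hxW]
  obtain ⟨S, hS, hSa⟩ := dp_arc_conn (Metric.isOpen_ball.sdiff hφ.isClosed_range)
    ((hδ η hη).2 x hxb y hyb (hsub hxW) (hsub hyW) hyx)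
  refine ⟨S, fun z hz => ⟨?_, (connectedComponentIn_subset _ _ (hS hz)).1⟩, hSa⟩
  rw [connectedComponentIn_eq hxW]
  exact hSa.isPreconnected.subset_connectedComponentIn hSa.left
    (fun z hz => (connectedComponentIn_subset _ _ (hS hz)).2) hz


lemma dp_crosses {φ : ℝ → ℂ} (hφ : IsClosedEmbedding φ)
    {a b p : ℂ} (ha : a ∉ range φ) (hb : b ∉ range φ)
    (hsep : b ∉ connectedComponentIn (range φ)ᶜ a) {f : ℝ → ℂ} (hc : ContinuousOn f (Icc 0 1))
    (hi : InjOn f (Icc 0 1)) (h0 : f 0 = a) (h1 : f 1 = b)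
    (hS : (f '' Icc 0 1 ∩ range φ).Subsingleton) (hp : p ∈ f '' Icc 0 1 ∩ range φ) :
    CrossesAt (range φ) (f '' Icc 0 1) p := by
  refine ⟨hp.2, hp.1, fun U hU => ?_⟩
  obtain ⟨r, hr, hrU⟩ := Metric.mem_nhds_iff.1 hU
  obtain ⟨⟨t, ht, rfl⟩, t₀, ht₀⟩ := hp
  obtain ⟨δ, hδ, hδr, hloc⟩ := dp_local hφ t₀ hr
  rw [ht₀] at hloc
  have hft : f t ∈ range φ := ⟨t₀, ht₀⟩
  have hoff : ∀ s ∈ Icc (0 : ℝ) 1, s ≠ t → f s ∉ range φ := by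
    intro s hs hst hsφ
    exact hst (hi hs ht (hS ⟨⟨s, hs, rfl⟩, hsφ⟩ ⟨⟨t, ht, rfl⟩, hft⟩))
  have ht0 : 0 < t := lt_of_le_of_ne ht.1 fun h => ha (by rw [← h0, h]; exact hft)
  have ht1 : t < 1 := lt_of_le_of_ne ht.2 fun h => hb (by rw [← h1, ← h]; exact hft)
  have s1 : Ico 0 t ⊆ Icc (0 : ℝ) 1 := fun s hs => ⟨hs.1, hs.2.le.trans ht.2⟩
  have s2 : Ioc t 1 ⊆ Icc (0 : ℝ) 1 := fun s hs => ⟨ht.1.trans hs.1.le, hs.2⟩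
  have k1 : f '' Ico 0 t ⊆ connectedComponentIn (range φ)ᶜ a := by
    refine (isPreconnected_Ico.image f (hc.mono s1)).subset_connectedComponentIn
      ⟨0, ⟨le_rfl, ht0⟩, h0⟩ ?_
    rintro _ ⟨s, hs, rfl⟩
    exact hoff s (s1 hs) hs.2.ne
  have k2 : f '' Ioc t 1 ⊆ connectedComponentIn (range φ)ᶜ b := by
    refine (isPreconnected_Ioc.image f (hc.mono s2)).subset_connectedComponentIn
      ⟨1, ⟨ht1, le_rfl⟩, h1⟩ ?_
    rintro _ ⟨s, hs, rfl⟩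
    exact hoff s (s2 hs) hs.1.ne'
  have c1 : f t ∈ closure (f '' Ico 0 t) :=
    ((hc t ht).mono s1).mem_closure_image (by rw [closure_Ico ht0.ne]; exact right_mem_Icc.2 ht0.le)
  have c2 : f t ∈ closure (f '' Ioc t 1) :=
    ((hc t ht).mono s2).mem_closure_image (by rw [closure_Ioc ht1.ne]; exact left_mem_Icc.2 ht1.le)
  obtain ⟨x₁, hx₁b, hx₁⟩ := mem_closure_iff_nhds.1 c1 _ (Metric.ball_mem_nhds _ hδ)
  obtain ⟨x₂, hx₂b, hx₂⟩ := mem_closure_iff_nhds.1 c2 _ (Metric.ball_mem_nhds _ hδ)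
  have hx₁σ := connectedComponentIn_subset _ _ (k1 hx₁)
  have hx₂σ := connectedComponentIn_subset _ _ (k2 hx₂)
  set C₁ := connectedComponentIn (Metric.ball (f t) r \ range φ) x₁ with hC₁
  set C₂ := connectedComponentIn (Metric.ball (f t) r \ range φ) x₂ with hC₂
  have hC₁s : C₁ ⊆ Metric.ball (f t) r \ range φ := connectedComponentIn_subset _ _
  have hC₂s : C₂ ⊆ Metric.ball (f t) r \ range φ := connectedComponentIn_subset _ _
  have hbb := Metric.ball_subset_ball (x := f t) hδr
  have hx₁C : x₁ ∈ C₁ := mem_connectedComponentIn ⟨hbb hx₁b, hx₁σ⟩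
  have hx₂C : x₂ ∈ C₂ := mem_connectedComponentIn ⟨hbb hx₂b, hx₂σ⟩
  have hC₁W : C₁ ⊆ connectedComponentIn (range φ)ᶜ a := by
    rw [connectedComponentIn_eq (k1 hx₁)]
    exact isPreconnected_connectedComponentIn.subset_connectedComponentIn hx₁C
      fun z hz => (hC₁s hz).2
  have hC₂W : C₂ ⊆ connectedComponentIn (range φ)ᶜ b := by
    rw [connectedComponentIn_eq (k2 hx₂)]
    exact isPreconnected_connectedComponentIn.subset_connectedComponentIn hx₂C
      fun z hz => (hC₂s hz).2
  refine ⟨Metric.ball (f t) δ ∪ C₁ ∪ C₂, ?_, ?_, C₁, C₂, ?_, ?_,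
    isPreconnected_connectedComponentIn, isPreconnected_connectedComponentIn,
    ⟨x₁, image_mono s1 hx₁, hx₁C⟩, ⟨x₂, image_mono s2 hx₂, hx₂C⟩⟩
  · filter_upwards [Metric.ball_mem_nhds (f t) hδ] with z hz using Or.inl (Or.inl hz)
  · refine (union_subset (union_subset hbb ?_) ?_).trans hrU
    · exact fun z hz => (hC₁s hz).1
    · exact fun z hz => (hC₂s hz).1
  · apply Subset.antisymm
    · rintro z ⟨(hz | hz) | hz, hzσ⟩
      · by_cases hza : z ∈ connectedComponentIn (range φ)ᶜ a
        · refine Or.inl (hloc x₁ hx₁b z hz hx₁σ hzσ ?_)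
          rwa [← connectedComponentIn_eq (k1 hx₁)]
        · have := dp_two_sides hφ ha hb hzσ hsep hza
          refine Or.inr (hloc x₂ hx₂b z hz hx₂σ hzσ ?_)
          rwa [← connectedComponentIn_eq (k2 hx₂)]
      · exact Or.inl hz
      · exact Or.inr hz
    · rintro z (hz | hz)
      · exact ⟨Or.inl (Or.inr hz), (hC₁s hz).2⟩
      · exact ⟨Or.inr hz, (hC₂s hz).2⟩
  · rw [Set.disjoint_left]
    intro z hz1 hz2
    exact hsep (dp_mem_comp_trans (hC₁W hz1) (dp_mem_comp_symm (hC₂W hz2)))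


lemma dp_main {ι : Type*} [Finite ι] {φ : ι → ℝ → ℂ} (hφ : DPFam φ) : ∀ (n : ℕ) (a b : ℂ),
    (∀ i, a ∉ range (φ i)) → (∀ i, b ∉ range (φ i)) →
    {i | b ∉ connectedComponentIn (range (φ i))ᶜ a}.ncard ≤ n →
    ∃ S, DPA S a b ∧ (∀ i, (S ∩ range (φ i)).Subsingleton) ∧
      (∀ i, b ∈ connectedComponentIn (range (φ i))ᶜ a → ∀ z ∈ S, z ∉ range (φ i)) ∧
      ∀ z ∈ S, ∀ i j, i ≠ j → ¬ (z ∈ range (φ i) ∧ z ∈ range (φ j)) := by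
  intro n
  induction n using Nat.strong_induction_on with
  | _ n ih =>
  intro a b ha hb hn
  have hKc : ∀ i, IsClosed (range (φ i)) := fun i => (hφ.emb i).isClosed_range
  have hOo : IsOpen (⋃ i, range (φ i))ᶜ := (isClosed_iUnion_of_finite hKc).isOpen_compl
  set C := connectedComponentIn (⋃ i, range (φ i))ᶜ a with hC
  have hCs : C ⊆ (⋃ i, range (φ i))ᶜ := connectedComponentIn_subset _ _
  have hCoff : ∀ z ∈ C, ∀ i, z ∉ range (φ i) := fun z hz i hzi => hCs hz (mem_iUnion.2 ⟨i, hzi⟩)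
  have hCo : IsOpen C := hOo.connectedComponentIn
  have haO : a ∈ (⋃ i, range (φ i))ᶜ := fun h => by
    obtain ⟨i, hi⟩ := mem_iUnion.1 h
    exact ha i hi
  have haC : a ∈ C := mem_connectedComponentIn haO
  have hCi : ∀ i, C ⊆ connectedComponentIn (range (φ i))ᶜ a := fun i =>
    isPreconnected_connectedComponentIn.subset_connectedComponentIn haC fun z hz => hCoff z hz i
  by_cases hbC : b ∈ C
  · obtain ⟨S, hS, hSa⟩ := dp_arc_conn hOo hbC
    refine ⟨S, hSa, ?_, fun i _ z hz => hCoff z (hS hz) i,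
      fun z hz i j _ h => hCoff z (hS hz) i h.1⟩
    intro i z hz
    exact absurd hz.2 (hCoff z (hS hz.1) i)
  set D := {i | b ∉ connectedComponentIn (range (φ i))ᶜ a} with hD
  set P : Set ℂ := {z | ∃ i j, i ≠ j ∧ z ∈ range (φ i) ∩ range (φ j)} with hP
  have hPf : P.Finite := by
    have : P = ⋃ i, ⋃ j, ⋃ (_ : i ≠ j), range (φ i) ∩ range (φ j) := by
      ext z
      simp only [hP, mem_ofPred_eq, mem_iUnion, exists_prop]
    rw [this]
    exact finite_iUnion fun i => finite_iUnion fun j => finite_iUnion fun h =>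
      (hφ.meet i j h).finite
  have hsub : DPFam fun j : {j // j ∉ D} => φ j.1 :=
    ⟨fun j => hφ.emb _, fun j => hφ.sep _, fun j k h => hφ.meet _ _ fun h' => h (Subtype.ext h'),
      fun j k h => hφ.cross _ _ fun h' => h (Subtype.ext h')⟩
  have hbR := dp_nonsep hsub hPf (a := a) (b := b) (fun j => ha _) (fun j => hb _)
    (by rintro ⟨i, j, -, h, -⟩; exact ha i h) (by rintro ⟨i, j, -, h, -⟩; exact hb i h)
    (fun j => not_not.1 j.2)
  set O' := ((⋃ j : {j // j ∉ D}, range (φ j.1)) ∪ P)ᶜ with hO'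
  set R' := connectedComponentIn O' a with hR'
  have hR's : R' ⊆ O' := connectedComponentIn_subset _ _
  have haR : a ∈ R' := by
    by_contra hne
    have : a ∉ O' := fun h => hne (mem_connectedComponentIn h)
    rw [hR', connectedComponentIn_eq_empty this] at hbR
    exact hbR
  have hp : ∃ p ∈ R', p ∈ closure C ∧ p ∉ C := by
    by_contra hcon
    push Not at hcon
    obtain ⟨z, -, hz1, hz2⟩ := (isPreconnected_connectedComponentIn : IsPreconnected R') C
      (closure C)ᶜ hCo
      isClosed_closure.isOpen_compl
      (fun z hz => by
        by_cases h : z ∈ closure C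
        · exact Or.inl (hcon z hz h)
        · exact Or.inr h) ⟨a, haR, haC⟩ ⟨b, hbR, fun h => hbC (hcon b hbR h)⟩
    exact hz2 (subset_closure hz1)
  obtain ⟨p, hpR, hpcl, hpC⟩ := hp
  have hpU : ∃ i, p ∈ range (φ i) := by
    by_contra hcon
    exact hpC (dp_comp_closed hOo (fun h => hcon (mem_iUnion.1 h)) hpcl)
  obtain ⟨i, hpi⟩ := hpU
  have hiD : i ∈ D := by
    by_contra hiD
    exact hR's hpR (Or.inl (mem_iUnion.2 ⟨⟨i, hiD⟩, hpi⟩))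
  have hpj : ∀ j, j ≠ i → p ∉ range (φ j) := fun j hj hpj =>
    hR's hpR (Or.inr ⟨i, j, hj.symm, hpi, hpj⟩)
  have hNo : IsOpen (⋃ j : {j // j ≠ i}, range (φ j.1))ᶜ :=
    (isClosed_iUnion_of_finite fun j : {j // j ≠ i} => hKc j.1).isOpen_compl
  obtain ⟨r, hr, hrN⟩ := Metric.isOpen_iff.1 hNo p (fun h => by
    obtain ⟨j, hj⟩ := mem_iUnion.1 h
    exact hpj j.1 j.2 hj)
  have hball : ∀ z ∈ Metric.ball p r, ∀ j, j ≠ i → z ∉ range (φ j) := fun z hz j hj hzj =>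
    hrN hz (mem_iUnion.2 ⟨⟨j, hj⟩, hzj⟩)
  obtain ⟨t₀, ht₀⟩ := hpi
  obtain ⟨δ, hδ, hδr, hloc⟩ := dp_local (hφ.emb i) t₀ hr
  obtain ⟨x₁, ⟨hx₁W, hx₁b⟩, S₁, hS₁, hS₁a⟩ := dp_access (hφ.emb i) (hφ.sep i) (ha i) t₀ hδ
  obtain ⟨x₂, ⟨hx₂W, hx₂b⟩, S₂, hS₂, hS₂a⟩ := dp_access (hφ.emb i) (hφ.sep i) (hb i) t₀ hδ
  rw [ht₀] at hloc hx₁b hx₂b hS₁ hS₁a hS₂ hS₂a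
  have hbb := Metric.ball_subset_ball (x := p) hδr
  obtain ⟨z, hzb, hzC⟩ := mem_closure_iff_nhds.1 hpcl _ (Metric.ball_mem_nhds p hδ)
  have hx₁off := connectedComponentIn_subset _ _ hx₁W
  have hx₂off := connectedComponentIn_subset _ _ hx₂W
  have hx₁z : x₁ ∈ connectedComponentIn (Metric.ball p r \ range (φ i)) z :=
    hloc z hzb x₁ hx₁b (hCoff z hzC i) hx₁off
      (dp_mem_comp_trans (dp_mem_comp_symm (hCi i hzC)) hx₁W)
  have hx₁C : x₁ ∈ C := by
    refine dp_mem_comp_trans hzC (connectedComponentIn_mono z ?_ hx₁z)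
    rintro y ⟨hyb, hyi⟩ hy
    obtain ⟨j, hj⟩ := mem_iUnion.1 hy
    by_cases hji : j = i
    · exact hyi (hji ▸ hj)
    · exact hball y hyb j hji hj
  have hx₂j : ∀ j, j ≠ i → x₂ ∈ connectedComponentIn (range (φ j))ᶜ a := by
    intro j hj
    refine dp_mem_comp_trans (hCi j hx₁C) ?_
    exact (convex_ball p r).isPreconnected.subset_connectedComponentIn (hbb hx₁b)
      (fun y hy => hball y hy j hj) (hbb hx₂b)
  have hx₂ : ∀ j, x₂ ∉ range (φ j) := by
    intro j
    by_cases hji : j = i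
    · rw [hji]; exact hx₂off
    · exact hball x₂ (hbb hx₂b) j hji
  have hbx₂ : b ∈ connectedComponentIn (range (φ i))ᶜ x₂ := dp_mem_comp_symm hx₂W
  have hD' : {j | b ∉ connectedComponentIn (range (φ j))ᶜ x₂} ⊂ D := by
    refine (ssubset_iff_of_subset ?_).2 ⟨i, hiD, fun h => h hbx₂⟩
    intro j hj hbj
    by_cases hji : j = i
    · rw [hji] at hj; exact hj hbx₂
    · exact hj (dp_mem_comp_trans (dp_mem_comp_symm (hx₂j j hji)) hbj)
  have hcard := ncard_lt_ncard hD' (toFinite _)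
  obtain ⟨S', hS'a, hS's, hS'o, hS'v⟩ := ih _ (lt_of_lt_of_le hcard hn) x₂ b hx₂ hb le_rfl
  obtain ⟨T, hT, hTa⟩ := dp_arc_conn hOo hx₁C
  obtain ⟨R₁, hR₁, hR₁a⟩ := hTa.trans hS₁a
  obtain ⟨R₂, hR₂, hR₂a⟩ := hR₁a.trans hS₂a.symm
  obtain ⟨R, hR, hRa⟩ := hR₂a.trans hS'a
  have hpb : p ∈ Metric.ball p r := Metric.mem_ball_self hr
  have key : ∀ y ∈ R, y ∉ S' → ∀ j, y ∈ range (φ j) → j = i ∧ y = p := by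
    intro y hy hyS' j hyj
    rcases hR hy with hy | hy
    · rcases hR₂ hy with hy | hy
      · rcases hR₁ hy with hy | hy
        · exact absurd hyj (hCoff y (hT hy) j)
        · rcases hS₁ hy with hy | hy
          · refine ⟨?_, hy⟩
            by_contra hji
            exact hpj j hji (by rw [← (hy : y = p)]; exact hyj)
          · by_cases hji : j = i
            · exact absurd (hji ▸ hyj) (connectedComponentIn_subset _ _ hy.1)
            · exact absurd hyj (hball y (hbb hy.2) j hji)
      · rcases hS₂ hy with hy | hy
        · refine ⟨?_, hy⟩
          by_contra hji
          exact hpj j hji (by rw [← (hy : y = p)]; exact hyj)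
        · by_cases hji : j = i
          · exact absurd (hji ▸ hyj) (connectedComponentIn_subset _ _ hy.1)
          · exact absurd hyj (hball y (hbb hy.2) j hji)
    · exact absurd hy hyS'
  have key1 : ∀ y ∈ R, y ∈ range (φ i) → y = p := by
    intro y hy hyi
    by_cases hyS : y ∈ S'
    · exact absurd hyi (hS'o i hbx₂ y hyS)
    · exact (key y hy hyS i hyi).2
  have key2 : ∀ y ∈ R, ∀ j, j ≠ i → y ∈ range (φ j) → y ∈ S' := by
    intro y hy j hji hyj
    by_contra hyS
    exact hji (key y hy hyS j hyj).1
  refine ⟨R, hRa, ?_, ?_, ?_⟩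
  · intro j y hy y' hy'
    by_cases hji : j = i
    · subst hji
      rw [key1 y hy.1 hy.2, key1 y' hy'.1 hy'.2]
    · exact hS's j ⟨key2 y hy.1 j hji hy.2, hy.2⟩ ⟨key2 y' hy'.1 j hji hy'.2, hy'.2⟩
  · intro j hbj y hy hyj
    have hji : j ≠ i := by
      rintro rfl
      exact hiD hbj
    exact hS'o j (dp_mem_comp_trans (dp_mem_comp_symm (hx₂j j hji)) hbj) y
      (key2 y hy j hji hyj) hyj
  · rintro y hy k l hkl ⟨hyk, hyl⟩
    by_cases hki : k = i
    · subst hki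
      have := key1 y hy hyk
      exact hpj l hkl.symm (this ▸ hyl)
    · by_cases hli : l = i
      · subst hli
        have := key1 y hy hyl
        exact hpj k hkl (this ▸ hyk)
      · exact hS'v y (key2 y hy k hki hyk) k l hkl ⟨hyk, hyl⟩


lemma dp_cross_image {X Y : Type*} [TopologicalSpace X] [TopologicalSpace Y] (Φ : X ≃ₜ Y)
    {σ γ : Set X} {p : X} (h : CrossesAt σ γ p) : CrossesAt (Φ '' σ) (Φ '' γ) (Φ p) := by
  obtain ⟨h1, h2, h3⟩ := h
  refine ⟨⟨p, h1, rfl⟩, ⟨p, h2, rfl⟩, fun U hU => ?_⟩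
  obtain ⟨V, hV, hVU, C₁, C₂, hVC, hd, hC1, hC2, hn1, hn2⟩ := h3 (Φ ⁻¹' U)
    (Φ.continuous.continuousAt.preimage_mem_nhds hU)
  refine ⟨Φ '' V, ?_, image_subset_iff.2 hVU, Φ '' C₁, Φ '' C₂, ?_, ?_,
    hC1.image _ Φ.continuous.continuousOn, hC2.image _ Φ.continuous.continuousOn, ?_, ?_⟩
  · rw [← Φ.map_nhds_eq]
    exact image_mem_map hV
  · rw [← image_sdiff Φ.injective, hVC, image_union]
  · exact (disjoint_image_iff Φ.injective).2 hd
  · rw [← image_inter Φ.injective]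
    exact hn1.image _
  · rw [← image_inter Φ.injective]
    exact hn2.image _

end DP

/-- **Existence of dual paths.** If `a`, `b` lie on no arc of an arrangement of arcs `A`,
then there is a simple arc from `a` to `b` avoiding all intersection points of arcs of
`A` and meeting each arc of `A` in at most one point, at which it crosses that arc. -/
theorem exists_dual_path (A : Finset (Set Plane)) (hA : IsArcArrangement A)
    (a b : Plane) (hab : a ≠ b) (ha : ∀ σ ∈ A, a ∉ σ) (hb : ∀ σ ∈ A, b ∉ σ) :
    ∃ f : ℝ → Plane, ContinuousOn f (Set.Icc 0 1) ∧ Set.InjOn f (Set.Icc 0 1) ∧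
      f 0 = a ∧ f 1 = b ∧
      (∀ p ∈ f '' Set.Icc (0 : ℝ) 1, ∀ σ ∈ A, ∀ τ ∈ A, σ ≠ τ → ¬(p ∈ σ ∧ p ∈ τ)) ∧
      ∀ σ ∈ A, (f '' Set.Icc (0 : ℝ) 1 ∩ σ).Subsingleton ∧
        ∀ p ∈ f '' Set.Icc (0 : ℝ) 1 ∩ σ, CrossesAt σ (f '' Set.Icc (0 : ℝ) 1) p := by
  obtain ⟨hA1, hA2⟩ := hA
  let Φ : Plane ≃ₜ ℂ := Complex.orthonormalBasisOneI.repr.toHomeomorph.symm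
  have e : ∀ σ : {σ // σ ∈ A}, ↥σ.1 ≃ₜ ℝ := fun σ => (hA1 σ.1 σ.2).2.1.some
  let φ : {σ // σ ∈ A} → ℝ → ℂ := fun σ t => Φ ((e σ).symm t)
  have hr : ∀ σ, range (φ σ) = Φ '' σ.1 := by
    intro σ
    ext z
    constructor
    · rintro ⟨t, rfl⟩
      exact ⟨_, ((e σ).symm t).2, rfl⟩
    · rintro ⟨x, hx, rfl⟩
      exact ⟨e σ ⟨x, hx⟩, by simp [φ]⟩
  have hmem : ∀ σ x, Φ x ∈ range (φ σ) ↔ x ∈ σ.1 := by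
    intro σ x
    rw [hr, Φ.injective.mem_set_image]
  have hfam : DPFam φ := by
    refine ⟨fun σ => ?_, fun σ h => ?_, ?_, ?_⟩
    · exact Φ.isClosedEmbedding.comp
        ((hA1 σ.1 σ.2).1.isClosedEmbedding_subtypeVal.comp (e σ).symm.isClosedEmbedding)
    · refine (hA1 σ.1 σ.2).2.2 ?_
      rw [hr, ← Φ.image_compl] at h
      exact Φ.isPreconnected_image.1 h
    · intro σ τ h
      rw [hr, hr, ← image_inter Φ.injective]
      exact (hA2 σ.1 σ.2 τ.1 τ.2 fun h' => h (Subtype.ext h')).1.image _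
    · intro σ τ h
      rw [hr, hr, ← image_inter Φ.injective]
      rintro _ ⟨p, hp, rfl⟩
      exact dp_cross_image Φ ((hA2 σ.1 σ.2 τ.1 τ.2 fun h' => h (Subtype.ext h')).2 p hp).1
  have ha' : ∀ σ, Φ a ∉ range (φ σ) := fun σ h => ha σ.1 σ.2 ((hmem σ a).1 h)
  have hb' : ∀ σ, Φ b ∉ range (φ σ) := fun σ h => hb σ.1 σ.2 ((hmem σ b).1 h)
  obtain ⟨S, hSa, hSs, hSo, hSv⟩ := dp_main hfam _ (Φ a) (Φ b) ha' hb' le_rfl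
  obtain ⟨f, hc, hi, h0, h1, rfl⟩ := hSa.unit (Φ.injective.ne hab)
  have him : ∀ s : Set ℝ, (fun t => Φ.symm (f t)) '' s = Φ.symm '' (f '' s) := fun s =>
    (image_image Φ.symm f s).symm
  have hS : ∀ x, x ∈ (fun t => Φ.symm (f t)) '' Icc (0 : ℝ) 1 ↔ Φ x ∈ f '' Icc (0 : ℝ) 1 := by
    intro x
    constructor
    · rintro ⟨t, ht, rfl⟩
      exact ⟨t, ht, by simp⟩
    · rintro ⟨t, ht, h⟩
      exact ⟨t, ht, by simp [h]⟩
  refine ⟨fun t => Φ.symm (f t), Φ.symm.continuous.comp_continuousOn hc,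
    Φ.symm.injective.injOn.comp hi (mapsTo_univ _ _), by simp [h0], by simp [h1], ?_, ?_⟩
  · rintro p hp σ hσ τ hτ hne ⟨hpσ, hpτ⟩
    exact hSv (Φ p) ((hS p).1 hp) ⟨σ, hσ⟩ ⟨τ, hτ⟩ (fun h => hne (congrArg Subtype.val h))
      ⟨(hmem ⟨σ, hσ⟩ p).2 hpσ, (hmem ⟨τ, hτ⟩ p).2 hpτ⟩
  · intro σ hσ
    constructor
    · rintro p ⟨hp, hpσ⟩ q ⟨hq, hqσ⟩
      exact Φ.injective (hSs ⟨σ, hσ⟩ ⟨(hS p).1 hp, (hmem ⟨σ, hσ⟩ p).2 hpσ⟩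
        ⟨(hS q).1 hq, (hmem ⟨σ, hσ⟩ q).2 hqσ⟩)
    · rintro p ⟨hp, hpσ⟩
      have hpS := (hS p).1 hp
      have hpσ' := (hmem ⟨σ, hσ⟩ p).2 hpσ
      have := dp_cross_image Φ.symm (dp_crosses (hfam.emb ⟨σ, hσ⟩) (ha' _) (hb' _)
        (fun h => hSo ⟨σ, hσ⟩ h _ hpS hpσ') hc hi h0 h1 (hSs ⟨σ, hσ⟩) ⟨hpS, hpσ'⟩)
      rw [hr, ← him, image_image] at this
      simpa using this

end
end

section
/- Let D be a pseudolinear good drawing of K_n in ℝ². Then for every 3-cycle T of K_n, the bounded closed disc determined by the simple closed curve D[T] is convex; consequently the drawing of K_n in the sphere S² obtained from D via the inverse of a stereographic projection is face-convex, with outer face the face containing the projection point. -/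
open Set Topology

noncomputable section

theorem exp_const {X : Type*} [TopologicalSpace X] {S : Set X} (hS : IsPreconnected S) {f : X → ℂ}
    (hf : ContinuousOn f S) (h1 : ∀ x ∈ S, Complex.exp (f x) = 1) {x y : X} (hx : x ∈ S)
    (hy : y ∈ S) : f x = f y := by
  have : DiscreteTopology (AddSubgroup.zmultiples (2 * Real.pi * Complex.I) : Set ℂ) :=
    NormedSpace.discreteTopology_zmultiples _
  refine hS.constant_of_mapsTo (T := (AddSubgroup.zmultiples (2 * Real.pi * Complex.I) : Set ℂ))
    ⟨this⟩ hf ?_ hx hy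
  intro z hz
  obtain ⟨n, hn⟩ := Complex.exp_eq_one_iff.1 (h1 z hz)
  exact AddSubgroup.mem_zmultiples_iff.2 ⟨n, by rw [hn]; simp⟩

theorem exists_log {X : Type*} [TopologicalSpace X] [SimplyConnectedSpace X]
    [LocallyPathConnectedSpace X] {f : X → ℂ} (hf : Continuous f) (h0 : ∀ x, f x ≠ 0) :
    ∃ g : X → ℂ, Continuous g ∧ ∀ x, Complex.exp (g x) = f x := by
  obtain ⟨x₀⟩ : Nonempty X := inferInstance
  rcases Complex.isCoveringMapOn_exp.existsUnique_continuousMap_lifts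
    ⟨f, hf⟩ (a₀ := x₀) (Complex.exp_log (h0 x₀)) (fun x ↦ h0 x) with ⟨g, ⟨-, hg⟩, -⟩
  exact ⟨g, g.continuous, fun x => congrFun hg x⟩

theorem ray_log {F : ℝ → ℂ} (hF : Continuous F) (h0 : ∀ x, F x ≠ 0)
    (h1 : Filter.Tendsto F Filter.atTop (𝓝 1)) :
    ∃ g : ℝ → ℂ, Continuous g ∧ (∀ x, Complex.exp (g x) = F x) ∧
      Filter.Tendsto g Filter.atTop (𝓝 0) := by
  obtain ⟨g, hg, hgF⟩ := exists_log hF h0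
  obtain ⟨T, hT⟩ := Filter.eventually_atTop.1
    (h1.eventually (Complex.isOpen_slitPlane.mem_nhds Complex.one_mem_slitPlane))
  have hc : ∀ t ≥ T, g t - Complex.log (F t) = g T - Complex.log (F T) := by
    intro t ht
    refine exp_const (S := Ici T) isPreconnected_Ici (f := fun t => g t - Complex.log (F t)) ?_ ?_
      ht (mem_Ici.2 le_rfl)
    · exact hg.continuousOn.sub (hF.continuousOn.clog fun x hx => hT x hx)
    · intro x hx
      rw [Complex.exp_sub, hgF, Complex.exp_log (h0 x), div_self (h0 x)]
  refine ⟨fun t => g t - (g T - Complex.log (F T)), by fun_prop, fun x => ?_, ?_⟩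
  · rw [Complex.exp_sub, Complex.exp_sub, hgF, hgF, Complex.exp_log (h0 T), div_self (h0 T), div_one]
  · have h2 : Filter.Tendsto (fun t => Complex.log (F t)) Filter.atTop (𝓝 0) := by
      simpa using h1.clog Complex.one_mem_slitPlane
    refine h2.congr' ?_
    filter_upwards [Filter.eventually_ge_atTop T] with t ht
    rw [← hc t ht]; ring

/-- no logarithm for a function asymptotic to the identity -/
theorem no_log {g : ℂ → ℂ} (hg : Continuous g) {r : ℝ} (hr : 0 < r)
    (h : ∀ z : ℂ, ‖z‖ = r → Complex.exp (g z) / z ∈ Complex.slitPlane) : False := by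
  set c : ℝ → ℂ := fun θ => r * Complex.exp (θ * Complex.I) with hc
  have hcc : Continuous c := by fun_prop
  have hcn : ∀ θ, ‖c θ‖ = r := by
    intro θ; simp [hc, Complex.norm_exp_ofReal_mul_I, abs_of_pos hr]
  have hc0 : ∀ θ, c θ ≠ 0 := fun θ h0 => by have := hcn θ; rw [h0] at this; simp at this; linarith
  have hr0 : (r : ℂ) ≠ 0 := by exact_mod_cast hr.ne'
  let ψ : ℝ → ℂ := fun θ => g (c θ) - Complex.log (Complex.exp (g (c θ)) / c θ)
    - θ * Complex.I - Complex.log r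
  have hψ : Continuous ψ := by
    have : Continuous fun θ => Complex.log (Complex.exp (g (c θ)) / c θ) := by
      refine Continuous.clog (Continuous.div (by fun_prop) hcc hc0) fun θ => h _ (hcn θ)
    fun_prop
  have h2 : ψ 0 = ψ (2 * Real.pi) := by
    refine exp_const isPreconnected_univ hψ.continuousOn ?_ (mem_univ _) (mem_univ _)
    intro θ _
    have : Complex.exp (g (c θ)) ≠ 0 := Complex.exp_ne_zero _
    simp only [ψ]
    rw [Complex.exp_sub, Complex.exp_sub, Complex.exp_sub,
      Complex.exp_log (div_ne_zero this (hc0 θ)), Complex.exp_log hr0]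
    have h3 := hc0 θ
    have h4 := Complex.exp_ne_zero (θ * Complex.I)
    rw [div_div_cancel₀ this, hc]
    field_simp
  have h3 : c (2 * Real.pi) = c 0 := by
    simp [hc, Complex.exp_two_pi_mul_I]
  simp only [ψ, h3] at h2
  have h4 : ((2 * Real.pi : ℝ) : ℂ) * Complex.I = 0 := by
    have : ((0:ℝ):ℂ) * Complex.I = 0 := by simp
    linear_combination this + h2
  simp [Real.pi_ne_zero] at h4

/-- Extension with control at infinity -/
theorem exists_ext {e : ℝ → ℂ} (he : IsClosedEmbedding e) {k : ℝ → ℂ} (hk : Continuous k)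
    (hlim : Filter.Tendsto k (Filter.cocompact ℝ) (𝓝 0)) :
    ∃ H : ℂ → ℂ, Continuous H ∧ (∀ t, H (e t) = k t) ∧ ∃ R, ∀ z, R ≤ ‖z‖ → ‖H z‖ ≤ 1 / 4 := by
  obtain ⟨H₀, hH₀⟩ := ContinuousMap.exists_extension' he ⟨k, hk⟩
  have hH : ∀ t, H₀ (e t) = k t := fun t => congrFun hH₀ t
  have hev : ∀ᶠ t in Filter.cocompact ℝ, ‖k t‖ ≤ 1 / 4 := by
    have := hlim.norm
    rw [norm_zero] at this
    exact this.eventually (Iic_mem_nhds (by norm_num))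
  obtain ⟨K, hK, hK2⟩ := Filter.mem_cocompact.1 hev
  obtain ⟨R, hR⟩ := (hK.image he.continuous).isBounded.exists_norm_le
  obtain ⟨M, hM⟩ := (hK.image hk).isBounded.exists_norm_le
  let ρ : ℂ → ℝ := fun z => 1 / 4 + |M| * max 0 (R + 1 - ‖z‖)
  have hρ : Continuous ρ := by fun_prop
  have hρ0 : ∀ z, 0 < ρ z := fun z => by positivity
  have hkρ : ∀ t, ‖k t‖ ≤ ρ (e t) := by
    intro t
    by_cases ht : t ∈ K
    · have h1 := hR _ (mem_image_of_mem _ ht)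
      have h2 := hM _ (mem_image_of_mem _ ht)
      have h3 : 1 ≤ max 0 (R + 1 - ‖e t‖) := le_max_of_le_right (by linarith)
      have h4 : |M| * 1 ≤ |M| * max 0 (R + 1 - ‖e t‖) :=
        mul_le_mul_of_nonneg_left h3 (abs_nonneg _)
      have := le_abs_self M
      simp only [ρ]; linarith
    · have h1 : ‖k t‖ ≤ 1 / 4 := hK2 ht
      have : 0 ≤ |M| * max 0 (R + 1 - ‖e t‖) := by positivity
      simp only [ρ]; linarith
  have hpos : ∀ z, 0 < max (ρ z) ‖H₀ z‖ := fun z => lt_max_of_lt_left (hρ0 z)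
  refine ⟨fun z => H₀ z * ((ρ z / max (ρ z) ‖H₀ z‖ : ℝ) : ℂ), ?_, ?_, R + 1, ?_⟩
  · refine H₀.continuous.mul (Complex.continuous_ofReal.comp (hρ.div ?_ fun z => (hpos z).ne'))
    exact hρ.max H₀.continuous.norm
  · intro t
    simp only [hH, max_eq_left (hkρ t), div_self (hρ0 _).ne', Complex.ofReal_one, mul_one]
  · intro z hz
    have h1 : ρ z = 1 / 4 := by
      simp only [ρ]; rw [max_eq_left (by linarith)]; ring
    rw [norm_mul, Complex.norm_real, Real.norm_of_nonneg (div_nonneg (hρ0 z).le (hpos z).le), ← h1,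
      mul_div_assoc', div_le_iff₀ (hpos z), mul_comm]
    exact mul_le_mul_of_nonneg_left (le_max_right _ _) (hρ0 z).le

theorem tendsto_u {ι : Type*} {l : Filter ι} {e : ι → ℂ}
    (he : Filter.Tendsto e l (Filter.cocompact ℂ)) (p q : ℂ) :
    Filter.Tendsto (fun t => (e t - q) / (e t - p)) l (𝓝 1) := by
  have h1 : Filter.Tendsto (fun t => e t - p) l (Filter.cocompact ℂ) := by
    have := (Homeomorph.subRight p).isClosedEmbedding.tendsto_cocompact
    exact this.comp he
  have h2 : Filter.Tendsto (fun t => 1 + (p - q) * (e t - p)⁻¹) l (𝓝 (1 + (p - q) * 0)) :=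
    ((Filter.tendsto_inv₀_cobounded (α := ℂ)).comp
      (by rwa [← Metric.cobounded_eq_cocompact] at h1)).const_mul _ |>.const_add _
  rw [mul_zero, add_zero] at h2
  refine h2.congr' ?_
  have h3 : ∀ᶠ z in Filter.cocompact ℂ, z ≠ 0 := by
    rw [← Metric.cobounded_eq_cocompact]; exact Bornology.eventually_ne_cobounded 0
  filter_upwards [h1.eventually h3] with t ht
  field_simp
  ring

theorem lemmaA {e : ℝ → ℂ} (he : IsClosedEmbedding e) {W : Set ℂ} (hW : IsOpen W)
    (hne : W.Nonempty) (hd : ∀ t, e t ∉ W) (hcl : closure W ⊆ W ∪ range e) (t₀ : ℝ) :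
    e t₀ ∈ closure W := by
  classical
  by_contra hp
  obtain ⟨q, hq⟩ := hne
  set p := e t₀ with hpdef
  have hU : {t | e t ∉ closure W} ∈ 𝓝 t₀ :=
    (isClosed_closure.preimage he.continuous).isOpen_compl.mem_nhds hp
  obtain ⟨ε, hε, hball⟩ := Metric.mem_nhds_iff.1 hU
  have hco : Filter.Tendsto e (Filter.cocompact ℝ) (Filter.cocompact ℂ) := he.tendsto_cocompact
  have hco1 : Filter.Tendsto e Filter.atTop (Filter.cocompact ℂ) := hco.mono_left atTop_le_cocompact
  have hco2 : Filter.Tendsto e Filter.atBot (Filter.cocompact ℂ) := hco.mono_left atBot_le_cocompact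
  have hneq : ∀ t, e t ≠ q := fun t h => hd t (h ▸ hq)
  have hu : ∀ t, t ≠ t₀ → (e t - q) / (e t - p) ≠ 0 := fun t ht =>
    div_ne_zero (sub_ne_zero.2 (hneq t)) (sub_ne_zero.2 fun h => ht (he.injective h))
  have hec := he.continuous
  obtain ⟨g1, hg1, hg1e, hg1l⟩ := ray_log
    (F := fun t => (e (max t (t₀ + ε)) - q) / (e (max t (t₀ + ε)) - p))
    (by
      refine Continuous.div (by fun_prop) (by fun_prop) fun t => sub_ne_zero.2 fun h => ?_
      have := he.injective h
      have := le_max_right t (t₀ + ε)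
      linarith)
    (fun t => hu _ (by have := le_max_right t (t₀ + ε); intro h; linarith))
    ((tendsto_u hco1 p q).congr' (by
      filter_upwards [Filter.eventually_ge_atTop (t₀ + ε)] with t ht
      rw [max_eq_left ht]))
  obtain ⟨g2, hg2, hg2e, hg2l⟩ := ray_log
    (F := fun t => (e (min (-t) (t₀ - ε)) - q) / (e (min (-t) (t₀ - ε)) - p))
    (by
      refine Continuous.div (by fun_prop) (by fun_prop) fun t => sub_ne_zero.2 fun h => ?_
      have := he.injective h
      have := min_le_right (-t) (t₀ - ε)
      linarith)
    (fun t => hu _ (by have := min_le_right (-t) (t₀ - ε); intro h; linarith))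
    ((tendsto_u (hco2.comp Filter.tendsto_neg_atTop_atBot) p q).congr' (by
      filter_upwards [Filter.eventually_ge_atTop (-(t₀ - ε))] with t ht
      rw [min_eq_left (by linarith)]; rfl))
  let χ : ℝ → ℝ := fun t => max 0 (min 1 ((t - (t₀ - ε)) / (2 * ε)))
  have hχ : Continuous χ := by fun_prop
  have hχ1 : ∀ t, t₀ + ε ≤ t → χ t = 1 := by
    intro t ht
    have : 1 ≤ (t - (t₀ - ε)) / (2 * ε) := by rw [le_div_iff₀ (by positivity)]; linarith
    simp only [χ]; rw [min_eq_left this]; simp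
  have hχ0 : ∀ t, t ≤ t₀ - ε → χ t = 0 := by
    intro t ht
    have : (t - (t₀ - ε)) / (2 * ε) ≤ 0 := div_nonpos_of_nonpos_of_nonneg (by linarith) (by positivity)
    simp only [χ]; rw [max_eq_left]; exact (min_le_right _ _).trans this
  let k : ℝ → ℂ := fun t => χ t * g1 t + (1 - χ t) * g2 (-t)
  have hk : Continuous k := by fun_prop
  have hk1 : ∀ t, t₀ + ε ≤ t → k t = g1 t := fun t ht => by simp [k, hχ1 t ht]
  have hk2 : ∀ t, t ≤ t₀ - ε → k t = g2 (-t) := fun t ht => by simp [k, hχ0 t ht]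
  have hkl : Filter.Tendsto k (Filter.cocompact ℝ) (𝓝 0) := by
    rw [cocompact_eq_atBot_atTop, Filter.tendsto_sup]
    constructor
    · refine (hg2l.comp Filter.tendsto_neg_atBot_atTop).congr' ?_
      filter_upwards [Filter.eventually_le_atBot (t₀ - ε)] with t ht
      rw [hk2 t ht]; rfl
    · refine hg1l.congr' ?_
      filter_upwards [Filter.eventually_ge_atTop (t₀ + ε)] with t ht
      rw [hk1 t ht]
  have hke : ∀ t, e t ∈ closure W → (e t - p) * Complex.exp (k t) = e t - q := by
    intro t ht
    have h1 : ε ≤ |t - t₀| := by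
      by_contra! h
      exact hball (Metric.mem_ball.2 h) ht
    have hne : e t - p ≠ 0 := by
      refine sub_ne_zero.2 fun h => ?_
      have := he.injective h
      rw [this] at h1; simp at h1; linarith
    rcases le_abs.1 h1 with h2 | h2
    · rw [hk1 t (by linarith), hg1e, max_eq_left (by linarith), mul_div_cancel₀ _ hne]
    · rw [hk2 t (by linarith), hg2e, neg_neg, min_eq_left (by linarith), mul_div_cancel₀ _ hne]
  obtain ⟨H, hH, hHe, R, hR⟩ := exists_ext he hk hkl
  let G : ℂ → ℂ := fun z => if z ∈ W then (z - p) * Complex.exp (H z) else z - q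
  have hG : Continuous G := by
    refine Continuous.if ?_ (by fun_prop) (by fun_prop)
    intro z hz
    have hz' : z ∈ closure W \ W := by
      have : z ∈ frontier W := hz
      rwa [hW.frontier_eq] at this
    obtain ⟨t, rfl⟩ := (hcl hz'.1).resolve_left hz'.2
    rw [hHe]
    exact hke t hz'.1
  have hG0 : ∀ z, G z ≠ 0 := by
    intro z
    simp only [G]
    split_ifs with hz
    · refine mul_ne_zero (sub_ne_zero.2 fun h => hd t₀ (show p ∈ W from h ▸ hz)) (Complex.exp_ne_zero _)
    · exact sub_ne_zero.2 fun h => hz (h ▸ hq)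
  obtain ⟨g, hg, hgG⟩ := exists_log hG hG0
  set r := max (max R 1) (max (4 * ‖p‖) (4 * ‖q‖)) with hr
  have hr1 : 1 ≤ r := (le_max_right _ _).trans (le_max_left _ _)
  have hrR : R ≤ r := (le_max_left _ _).trans (le_max_left _ _)
  have hrp : 4 * ‖p‖ ≤ r := (le_max_left _ _).trans (le_max_right _ _)
  have hrq : 4 * ‖q‖ ≤ r := (le_max_right _ _).trans (le_max_right _ _)
  refine no_log hg (r := r) (by linarith) fun z hz => ?_
  rw [hgG]
  have hz0 : z ≠ 0 := fun h => by rw [h, norm_zero] at hz; linarith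
  have hdiv : ∀ w : ℂ, 4 * ‖w‖ ≤ r → ‖w / z‖ ≤ 1 / 4 := by
    intro w hw
    rw [norm_div, hz, div_le_iff₀ (by linarith)]; linarith
  suffices h : ‖G z / z - 1‖ < 1 by
    left
    have := (Complex.abs_re_le_norm (G z / z - 1)).trans_lt h
    rw [abs_lt] at this
    simp at this ⊢
    linarith
  simp only [G]
  split_ifs with hzW
  · have h1 : (z - p) * Complex.exp (H z) / z - 1
        = (Complex.exp (H z) - 1) - p / z * (Complex.exp (H z) - 1) - p / z := by
      field_simp; ring
    have h2 : ‖Complex.exp (H z) - 1‖ ≤ 1 / 2 := by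
      have h3 := hR z (by rw [hz]; exact hrR)
      have := Complex.norm_exp_sub_one_le (x := H z) (by linarith)
      linarith
    have h3 := hdiv p hrp
    rw [h1]
    have h4 := norm_sub_le ((Complex.exp (H z) - 1) - p / z * (Complex.exp (H z) - 1)) (p / z)
    have h5 := norm_sub_le (Complex.exp (H z) - 1) (p / z * (Complex.exp (H z) - 1))
    rw [norm_mul] at h5
    have h6 : ‖p / z‖ * ‖Complex.exp (H z) - 1‖ ≤ 1 / 4 * (1 / 2) :=
      mul_le_mul h3 h2 (norm_nonneg _) (by norm_num)
    linarith
  · have h1 : (z - q) / z - 1 = -(q / z) := by field_simp; ring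
    rw [h1, norm_neg]
    have := hdiv q hrq
    linarith

theorem lemmaA_plane {e : ℝ → Plane} (he : IsClosedEmbedding e) {W : Set Plane} (hW : IsOpen W)
    (hne : W.Nonempty) (hd : ∀ t, e t ∉ W) (hcl : closure W ⊆ W ∪ range e) (t₀ : ℝ) :
    e t₀ ∈ closure W := by
  let φ : Plane ≃ₜ ℂ := Complex.orthonormalBasisOneI.repr.symm.toHomeomorph
  have := lemmaA (e := φ ∘ e) (φ.isClosedEmbedding.comp he) (W := φ '' W)
    (φ.isOpenMap _ hW) (hne.image _) (fun t h => hd t (by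
      obtain ⟨w, hw, h⟩ := h
      rw [← φ.injective h]; exact hw)) (by
      rw [← φ.image_closure, range_comp, ← image_union]
      exact image_mono hcl) t₀
  rw [← φ.image_closure] at this
  obtain ⟨w, hw, h⟩ := this
  rw [← φ.injective h]; exact hw

theorem closure_comp_subset {X : Type*} [TopologicalSpace X] {T : Set X} (x : X) :
    closure (connectedComponentIn Tᶜ x) ⊆ connectedComponentIn Tᶜ x ∪ T := by
  intro z hz
  by_cases hzT : z ∈ T
  · exact Or.inr hzT
  left
  by_cases hx : x ∈ Tᶜ
  · have hp : IsPreconnected (insert z (connectedComponentIn Tᶜ x)) :=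
      isPreconnected_connectedComponentIn.subset_closure (subset_insert _ _)
        (insert_subset hz subset_closure)
    exact hp.subset_connectedComponentIn (mem_insert_of_mem _ (mem_connectedComponentIn hx))
      (insert_subset hzT (connectedComponentIn_subset _ _)) (mem_insert _ _)
  · rw [connectedComponentIn_eq_empty hx] at hz; simp at hz

/-- A pseudoline is contained in the closure of each component of its complement. -/
theorem mem_closure_comp {e : ℝ → Plane} (he : IsClosedEmbedding e) {x : Plane}
    (hx : x ∉ range e) (t : ℝ) : e t ∈ closure (connectedComponentIn (range e)ᶜ x) :=
  lemmaA_plane he he.isClosed_range.isOpen_compl.connectedComponentIn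
    ⟨x, mem_connectedComponentIn hx⟩
    (fun t h => connectedComponentIn_subset _ _ h (mem_range_self t)) (closure_comp_subset x) t

/-- The two rays of a crossing pseudoline lie on different sides. -/
theorem cross_sides {σ : Set Plane} (hσ : IsPseudoline σ) {e : ℝ → Plane}
    (he : IsClosedEmbedding e) {t₀ : ℝ} (hint : ∀ t, e t ∈ σ → t = t₀)
    (hc : CrossesAt σ (range e) (e t₀)) {s t : ℝ} (hs : s < t₀) (ht : t₀ < t)
    {S : Set Plane} (hS : IsPreconnected S) (hSσ : S ⊆ σᶜ) (hsS : e s ∈ S) (htS : e t ∈ S) :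
    False := by
  obtain ⟨hcl, ⟨φ⟩, hdis⟩ := hσ
  let f : ℝ → Plane := Subtype.val ∘ φ.symm
  have hf : IsClosedEmbedding f := hcl.isClosedEmbedding_subtypeVal.comp φ.symm.isClosedEmbedding
  have hfr : range f = σ := by
    rw [range_comp, φ.symm.surjective.range_eq, image_univ, Subtype.range_coe]
  set W := connectedComponentIn σᶜ (e s) with hW
  have hWp : IsPreconnected W := isPreconnected_connectedComponentIn
  have hsσ : e s ∈ σᶜ := hSσ hsS
  have htW : e t ∈ W := hS.subset_connectedComponentIn hsS hSσ htS
  have hsW : e s ∈ W := mem_connectedComponentIn hsσ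
  have hray1 : e '' Iio t₀ ⊆ W := by
    refine (isPreconnected_Iio.image _ he.continuous.continuousOn).subset_connectedComponentIn
      (mem_image_of_mem _ hs) ?_
    rintro _ ⟨r, hr, rfl⟩ h
    exact (mem_Iio.1 hr).ne (hint _ h)
  have hray2 : e '' Ioi t₀ ⊆ W := by
    rw [hW, connectedComponentIn_eq htW]
    refine (isPreconnected_Ioi.image _ he.continuous.continuousOn).subset_connectedComponentIn
      (mem_image_of_mem _ ht) ?_
    rintro _ ⟨r, hr, rfl⟩ h
    exact (mem_Ioi.1 hr).ne' (hint _ h)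
  have hrays : ∀ z ∈ range e, z ∉ σ → z ∈ W := by
    rintro _ ⟨r, rfl⟩ h
    rcases lt_trichotomy r t₀ with h1 | h1 | h1
    · exact hray1 (mem_image_of_mem _ h1)
    · exact absurd (h1 ▸ hc.1) h
    · exact hray2 (mem_image_of_mem _ h1)
  obtain ⟨y, hy, hyW⟩ : ∃ y, y ∈ σᶜ ∧ y ∉ W := by
    by_contra! h
    exact hdis (by
      have : σᶜ = W := Subset.antisymm h (connectedComponentIn_subset _ _)
      rw [this]; exact hWp)
  obtain ⟨V, hV, -, C₁, C₂, hCV, -, hC1, hC2, ⟨z1, hz1, hz1'⟩, ⟨z2, hz2, hz2'⟩⟩ :=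
    hc.2.2 univ Filter.univ_mem
  have hCσ : C₁ ∪ C₂ ⊆ σᶜ := by rw [← hCV]; exact fun z hz => hz.2
  have key : ∀ C : Set Plane, IsPreconnected C → C ⊆ σᶜ → ∀ z ∈ range e, z ∈ C → C ⊆ W := by
    intro C hC hCs z hz hzC
    have hzW := hrays z hz (hCs hzC)
    rw [hW, connectedComponentIn_eq hzW]
    exact hC.subset_connectedComponentIn hzC hCs
  have h1 := key C₁ hC1 (subset_union_left.trans hCσ) z1 hz1 hz1'
  have h2 := key C₂ hC2 (subset_union_right.trans hCσ) z2 hz2 hz2'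
  obtain ⟨r, hr⟩ : e t₀ ∈ range f := hfr ▸ hc.1
  have hcl' := mem_closure_comp hf (x := y) (hfr ▸ hy) r
  rw [hfr, hr] at hcl'
  obtain ⟨w, hwV, hwY⟩ := mem_closure_iff_nhds.1 hcl' V hV
  have hwC : w ∈ C₁ ∪ C₂ := hCV ▸ ⟨hwV, connectedComponentIn_subset _ _ hwY⟩
  have hwW : w ∈ W := hwC.elim (fun h => h1 h) fun h => h2 h
  have e1 := connectedComponentIn_eq hwY
  have e2 := connectedComponentIn_eq hwW
  apply hyW
  rw [hW, e2, ← e1]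
  exact mem_connectedComponentIn hy

/-- Parametrization of a pseudoline through an arc. -/
theorem arc_param {σ A : Set Plane} (hσ : IsPseudoline σ) {f : ℝ → Plane}
    (hf : ContinuousOn f (Icc 0 1)) (hfi : InjOn f (Icc 0 1)) (hA : A = f '' Icc 0 1)
    (hAσ : A ⊆ σ) : ∃ (e : ℝ → Plane) (s t : ℝ), IsClosedEmbedding e ∧ range e = σ ∧ s < t ∧
      e s = f 0 ∧ e t = f 1 ∧ A = e '' Icc s t := by
  obtain ⟨hcl, ⟨φ⟩, -⟩ := hσ
  let e : ℝ → Plane := Subtype.val ∘ φ.symm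
  have he : IsClosedEmbedding e := hcl.isClosedEmbedding_subtypeVal.comp φ.symm.isClosedEmbedding
  have her : range e = σ := by
    rw [range_comp, φ.symm.surjective.range_eq, image_univ, Subtype.range_coe]
  have hex : ∀ x, ∃ r, x ∈ Icc (0:ℝ) 1 → e r = f x := by
    intro x
    by_cases hx : x ∈ Icc (0:ℝ) 1
    · have : f x ∈ range e := her ▸ hAσ (hA ▸ mem_image_of_mem _ hx)
      exact this.imp fun r hr _ => hr
    · exact ⟨0, fun h => absurd h hx⟩
  choose g hg using hex
  have hgc : ContinuousOn g (Icc 0 1) := by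
    rw [he.isInducing.continuousOn_iff]
    exact hf.congr fun x hx => hg x hx
  have hgi : InjOn g (Icc 0 1) := fun x hx y hy h => hfi hx hy (by rw [← hg x hx, ← hg y hy, h])
  have h0 : (0:ℝ) ∈ Icc (0:ℝ) 1 := by simp
  have h1 : (1:ℝ) ∈ Icc (0:ℝ) 1 := by simp
  have hAg : A = e '' (g '' Icc 0 1) := by
    rw [hA, image_image]
    exact image_congr fun x hx => (hg x hx).symm
  rcases hgc.strictMonoOn_of_injOn_Icc' zero_le_one hgi with hm | hm
  · refine ⟨e, g 0, g 1, he, her, hm h0 h1 one_pos, hg 0 h0, hg 1 h1, ?_⟩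
    rw [hAg]
    congr 1
    refine Subset.antisymm ?_ (intermediate_value_Icc zero_le_one hgc)
    rintro _ ⟨x, hx, rfl⟩
    exact ⟨hm.monotoneOn h0 hx hx.1, hm.monotoneOn hx h1 hx.2⟩
  · refine ⟨e ∘ Neg.neg, - g 0, - g 1, he.comp (Homeomorph.neg ℝ).isClosedEmbedding, ?_, ?_,
      by simp [hg 0 h0], by simp [hg 1 h1], ?_⟩
    · rw [neg_surjective.range_comp, her]
    · exact neg_lt_neg (hm h0 h1 one_pos)
    · rw [hAg, image_comp e Neg.neg, image_neg_Icc, neg_neg, neg_neg]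
      congr 1
      refine Subset.antisymm ?_ (intermediate_value_Icc' zero_le_one hgc)
      rintro _ ⟨x, hx, rfl⟩
      exact ⟨hm.antitoneOn hx h1 hx.2, hm.antitoneOn h0 hx hx.1⟩

theorem not_bounded_ray {e : ℝ → Plane} (he : IsClosedEmbedding e) {S : Set ℝ} (hS : IsClosed S)
    (hb : Bornology.IsBounded (e '' S)) : IsCompact S := by
  have h1 : IsCompact (e '' S) := Metric.isCompact_of_isClosed_isBounded (he.isClosedMap _ hS) hb
  exact he.isInducing.isCompact_iff.2 h1

/-- A bounded component of the complement of `T` misses a pseudoline that meets `T` in an arc. -/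
theorem bounded_disjoint {e : ℝ → Plane} (he : IsClosedEmbedding e) {s t : ℝ} {T : Set Plane}
    (h1 : e '' Icc s t ⊆ T) (h2 : T ∩ range e ⊆ e '' Icc s t) {q : Plane}
    (hb : Bornology.IsBounded (connectedComponentIn Tᶜ q)) (r : ℝ) :
    e r ∉ connectedComponentIn Tᶜ q := by
  intro hr
  have hrT : e r ∉ T := connectedComponentIn_subset _ _ hr
  have hT : ∀ r', r' ∉ Icc s t → e r' ∈ Tᶜ := by
    intro r' hr' h
    obtain ⟨r'', h3, h4⟩ := h2 ⟨h, mem_range_self _⟩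
    exact hr' (he.injective h4 ▸ h3)
  have hrI : r ∉ Icc s t := fun h => hrT (h1 (mem_image_of_mem _ h))
  have key : ∀ S : Set ℝ, IsPreconnected S → IsClosed S → r ∈ S → S ⊆ (Icc s t)ᶜ →
      IsCompact S := by
    intro S hS hSc hrS hSI
    refine not_bounded_ray he hSc (hb.subset ?_)
    rw [connectedComponentIn_eq hr]
    refine (hS.image _ he.continuous.continuousOn).subset_connectedComponentIn
      (mem_image_of_mem _ hrS) ?_
    rintro _ ⟨r', hr', rfl⟩
    exact hT _ (hSI hr')
  by_cases hrs : r < s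
  · have := key (Iic r) isPreconnected_Iic isClosed_Iic (mem_Iic.2 le_rfl)
      (fun x hx h => by have := mem_Iic.1 hx; have := h.1; linarith)
    exact not_bddBelow_Iic r this.bddBelow
  · have hrt : t < r := by
      by_contra! h
      exact hrI ⟨not_lt.1 hrs, h⟩
    have := key (Ici r) isPreconnected_Ici isClosed_Ici (mem_Ici.2 le_rfl)
      (fun x hx h => by have := mem_Ici.1 hx; have := h.2; linarith)
    exact not_bddAbove_Ici r this.bddAbove

theorem same_side {e : ℝ → Plane} (he : IsClosedEmbedding e) {T : Set Plane} {q c : Plane}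
    (hqT : q ∉ T) (hq : q ∉ range e) (hc : c ∉ range e)
    (hb : Bornology.IsBounded (connectedComponentIn Tᶜ q))
    (hT : ∀ z ∈ T, z ∉ range e → z ∈ connectedComponentIn (range e)ᶜ c) :
    c ∈ connectedComponentIn (range e)ᶜ q := by
  by_contra hcq
  have hsub : connectedComponentIn (range e)ᶜ q ⊆ connectedComponentIn Tᶜ q := by
    refine isPreconnected_connectedComponentIn.subset_connectedComponentIn
      (mem_connectedComponentIn hq) ?_
    intro z hz hzT
    have h1 := connectedComponentIn_eq hz
    have h2 := connectedComponentIn_eq (hT z hzT (connectedComponentIn_subset _ _ hz))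
    apply hcq
    rw [h1, ← h2]
    exact mem_connectedComponentIn hc
  have hbc := Metric.isBounded_closure_of_isBounded (hb.subset hsub)
  have := not_bounded_ray he (S := univ) isClosed_univ (hbc.subset (by
    rintro _ ⟨t, -, rfl⟩
    exact mem_closure_comp he hq t))
  exact noncompact_univ ℝ this

/-- Convenient form of pseudolinearity. -/
def PLData {n : ℕ} (D : GoodDrawing n Plane) (L : Fin n → Fin n → Set Plane) : Prop :=
  (∀ u v, u ≠ v → IsPseudoline (L u v) ∧ D.arc u v ⊆ L u v) ∧ (∀ u v, L u v = L v u) ∧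
  ∀ u v x y, u ≠ v → x ≠ y → u ≠ x → u ≠ y → ∃ p, L u v ∩ L x y = {p} ∧
    CrossesAt (L u v) (L x y) p ∧ CrossesAt (L x y) (L u v) p

theorem exists_PLData {n : ℕ} {D : GoodDrawing n Plane} (hD : D.Pseudolinear) :
    ∃ L, PLData D L := by
  obtain ⟨A, L, ⟨hA1, hA2⟩, h1, h2, h3⟩ := hD
  refine ⟨L, fun u v h => ⟨hA1 _ (h1 u v h).1, (h1 u v h).2⟩, h2, ?_⟩
  intro u v x y huv hxy hux huy
  refine hA2 _ (h1 u v huv).1 _ (h1 x y hxy).1 (h3 u v x y huv hxy ?_)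
  intro h
  have : u ∈ ({x, y} : Finset (Fin n)) := h ▸ by simp
  simp [hux, huy] at this

namespace PLData

variable {n : ℕ} {D : GoodDrawing n Plane} {L : Fin n → Fin n → Set Plane}

theorem param (h : PLData D L) {u v : Fin n} (huv : u ≠ v) :
    ∃ (e : ℝ → Plane) (s t : ℝ), IsClosedEmbedding e ∧ range e = L u v ∧ s < t ∧
      e s = D.vtx u ∧ e t = D.vtx v ∧ D.arc u v = e '' Icc s t := by
  obtain ⟨f, h1, h2, h3, h4, h5⟩ := D.isArc u v huv
  rw [← h3, ← h4]
  exact arc_param (h.1 u v huv).1 h1 h2 h5 (h.1 u v huv).2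

theorem left_mem (D : GoodDrawing n Plane) {u v : Fin n} (huv : u ≠ v) :
    D.vtx u ∈ D.arc u v := by
  obtain ⟨f, h1, h2, h3, h4, h5⟩ := D.isArc u v huv
  rw [h5, ← h3]
  exact mem_image_of_mem _ (by simp)

theorem right_mem (D : GoodDrawing n Plane) {u v : Fin n} (huv : u ≠ v) :
    D.vtx v ∈ D.arc u v := by
  rw [D.arc_symm]; exact left_mem D huv.symm

theorem inter (h : PLData D L) {u v w : Fin n} (huv : u ≠ v) (huw : u ≠ w) (hvw : v ≠ w)
    {z : Plane} (h1 : z ∈ L u v) (h2 : z ∈ L u w) : z = D.vtx u := by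
  obtain ⟨p, hp, -⟩ := h.2.2 v u u w huv.symm huw huv.symm hvw
  have hz : z ∈ ({p} : Set Plane) := hp ▸ ⟨h.2.1 u v ▸ h1, h2⟩
  have hu : D.vtx u ∈ ({p} : Set Plane) :=
    hp ▸ ⟨h.2.1 u v ▸ (h.1 u v huv).2 (left_mem D huv), (h.1 u w huw).2 (left_mem D huw)⟩
  rw [mem_singleton_iff.1 hz, mem_singleton_iff.1 hu]

theorem vtx_not (h : PLData D L) {u v w : Fin n} (huv : u ≠ v) (huw : u ≠ w) (hvw : v ≠ w) :
    D.vtx w ∉ L u v := by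
  intro hw
  have := h.inter huv huw hvw hw ((h.1 u w huw).2 (right_mem D huw))
  exact huw (D.vtx_inj this).symm

theorem tri_inter (h : PLData D L) {a b c : Fin n} (hab : a ≠ b) (hac : a ≠ c) (hbc : b ≠ c) :
    D.tri a b c ∩ L a b ⊆ D.arc a b := by
  rintro z ⟨(hz | hz) | hz, hzL⟩
  · exact hz
  · rw [h.inter hab.symm hbc hac (h.2.1 a b ▸ hzL) ((h.1 b c hbc).2 hz)]
    exact right_mem D hab
  · rw [h.inter hab hac hbc hzL ((h.1 a c hac).2 hz)]
    exact left_mem D hab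

theorem arm (h : PLData D L) {u v w : Fin n} (huv : u ≠ v) (huw : u ≠ w) (hvw : v ≠ w)
    {z : Plane} (hz : z ∈ D.arc u w) (hzL : z ∉ L u v) :
    z ∈ connectedComponentIn (L u v)ᶜ (D.vtx w) := by
  obtain ⟨e, s, t, he, her, hst, hs, ht, hA⟩ := h.param huw
  have hav : ∀ r, e r ∈ L u v → r = s := fun r hr =>
    he.injective (by rw [hs]; exact h.inter huv huw hvw hr (her ▸ mem_range_self r))
  rw [hA] at hz
  obtain ⟨r, hr, rfl⟩ := hz
  have hrs : s ≠ r := by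
    rintro rfl
    exact hzL (hs ▸ (h.1 u v huv).2 (left_mem D huv))
  rw [← ht]
  refine (isPreconnected_Ioc.image e he.continuous.continuousOn).subset_connectedComponentIn
    (s := e '' Ioc s t) (mem_image_of_mem _ ⟨hst, le_rfl⟩) ?_
    (mem_image_of_mem _ ⟨lt_of_le_of_ne hr.1 hrs, hr.2⟩)
  rintro _ ⟨r', hr', rfl⟩ hm
  exact hr'.1.ne' (hav r' hm)

theorem disjoint_side (h : PLData D L) {a b c : Fin n} (hab : a ≠ b) (hac : a ≠ c) (hbc : b ≠ c)
    {q : Plane} (hb : Bornology.IsBounded (connectedComponentIn (D.tri a b c)ᶜ q)) :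
    connectedComponentIn (D.tri a b c)ᶜ q ⊆ (L a b)ᶜ := by
  obtain ⟨e, s, t, he, her, hst, hs, ht, hA⟩ := h.param hab
  intro z hz hzL
  rw [← her] at hzL
  obtain ⟨r, rfl⟩ := hzL
  refine bounded_disjoint he (s := s) (t := t) ?_ ?_ hb r hz
  · rw [← hA]; exact fun z hz => Or.inl (Or.inl hz)
  · rw [← hA, her]; exact h.tri_inter hab hac hbc

theorem opp_side (h : PLData D L) {a b c : Fin n} (hab : a ≠ b) (hac : a ≠ c) (hbc : b ≠ c)
    {q : Plane} (hq : q ∉ D.tri a b c)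
    (hb : Bornology.IsBounded (connectedComponentIn (D.tri a b c)ᶜ q)) :
    D.vtx c ∈ connectedComponentIn (L a b)ᶜ q := by
  have hqL := h.disjoint_side hab hac hbc hb (mem_connectedComponentIn hq)
  obtain ⟨e, s, t, he, her, hst, hs, ht, hA⟩ := h.param hab
  rw [← her] at hqL ⊢
  refine same_side he hq hqL (her ▸ h.vtx_not hab hac hbc) hb ?_
  rintro z ((hz | hz) | hz) hzL <;> rw [her] at hzL ⊢
  · exact absurd ((h.1 a b hab).2 hz) hzL
  · rw [h.2.1 a b] at hzL ⊢
    exact h.arm hab.symm hbc hac hz hzL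
  · exact h.arm hab hac hbc hz hzL

theorem main_edge (h : PLData D L) {a b c : Fin n} (hab : a ≠ b) (hac : a ≠ c) (hbc : b ≠ c)
    {q : Plane} (hq : q ∉ D.tri a b c)
    (hb : Bornology.IsBounded (connectedComponentIn (D.tri a b c)ᶜ q)) {x y : Fin n} (hxy : x ≠ y)
    (hx : D.vtx x ∈ connectedComponentIn (D.tri a b c)ᶜ q)
    (hy : D.vtx y ∈ connectedComponentIn (D.tri a b c)ᶜ q ∨ y = a ∨ y = b ∨ y = c)
    {e : ℝ → Plane} (he : IsClosedEmbedding e) (her : range e = L x y) {s t r : ℝ}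
    (hs : e s = D.vtx x) (ht : e t = D.vtx y) (hsr : s ≤ r) (hrt : r < t)
    (hr : e r ∈ D.arc a b) : False := by
  have hdis := h.disjoint_side hab hac hbc hb
  have haL : D.vtx a ∈ L a b := (h.1 a b hab).2 (left_mem D hab)
  have hbL : D.vtx b ∈ L a b := (h.1 a b hab).2 (right_mem D hab)
  have hrL : e r ∈ L a b := (h.1 a b hab).2 hr
  have hxL : D.vtx x ∉ L a b := hdis hx
  have hxa : x ≠ a := fun h' => hxL (h' ▸ haL)
  have hxb : x ≠ b := fun h' => hxL (h' ▸ hbL)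
  obtain ⟨p, hp, -, hcr⟩ := h.2.2 x y a b hxy hab hxa hxb
  have hint : ∀ t', e t' ∈ L a b → t' = r := by
    intro t' ht'
    have h1 : e t' ∈ ({p} : Set Plane) := hp ▸ ⟨her ▸ mem_range_self _, ht'⟩
    have h2 : e r ∈ ({p} : Set Plane) := hp ▸ ⟨her ▸ mem_range_self _, hrL⟩
    exact he.injective (h1.trans h2.symm)
  have hpr : p = e r := by
    have h2 : e r ∈ ({p} : Set Plane) := hp ▸ ⟨her ▸ mem_range_self _, hrL⟩
    exact h2.symm
  have hsr' : s < r := by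
    refine lt_of_le_of_ne hsr ?_
    rintro rfl
    exact hxL (hs ▸ hrL)
  rw [hpr, ← her] at hcr
  have hRH : connectedComponentIn (D.tri a b c)ᶜ q ⊆ connectedComponentIn (L a b)ᶜ q :=
    isPreconnected_connectedComponentIn.subset_connectedComponentIn
      (mem_connectedComponentIn hq) hdis
  refine cross_sides (h.1 a b hab).1 he hint hcr hsr' hrt
    (isPreconnected_connectedComponentIn (x := q) (F := (L a b)ᶜ))
    (connectedComponentIn_subset _ _) (hs ▸ hRH hx) ?_
  rw [ht]
  rcases hy with hy | rfl | rfl | rfl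
  · exact hRH hy
  · exact absurd (hint t (ht ▸ haL)) hrt.ne'
  · exact absurd (hint t (ht ▸ hbL)) hrt.ne'
  · exact h.opp_side hab hac hbc hq hb

theorem main_arc (h : PLData D L) {a b c : Fin n} (hab : a ≠ b) (hac : a ≠ c) (hbc : b ≠ c)
    {q : Plane} (hq : q ∉ D.tri a b c)
    (hb : Bornology.IsBounded (connectedComponentIn (D.tri a b c)ᶜ q)) {x y : Fin n} (hxy : x ≠ y)
    (hx : D.vtx x ∈ connectedComponentIn (D.tri a b c)ᶜ q)
    (hy : D.vtx y ∈ connectedComponentIn (D.tri a b c)ᶜ q ∨ y = a ∨ y = b ∨ y = c) :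
    D.arc x y ⊆ connectedComponentIn (D.tri a b c)ᶜ q ∪ D.tri a b c := by
  obtain ⟨e, s, t, he, her, hst, hs, ht, hA⟩ := h.param hxy
  rw [hA]
  rintro _ ⟨r, hr, rfl⟩
  by_contra hcon
  have hex : ∃ r', s ≤ r' ∧ r' ≤ r ∧ e r' ∈ D.tri a b c := by
    by_contra! hno
    apply hcon
    left
    rw [connectedComponentIn_eq hx, ← hs]
    refine (isPreconnected_Icc.image e he.continuous.continuousOn).subset_connectedComponentIn
      (s := e '' Icc s r) (mem_image_of_mem _ ⟨le_rfl, hr.1⟩) ?_ (mem_image_of_mem _ ⟨hr.1, le_rfl⟩)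
    rintro _ ⟨r', hr', rfl⟩
    exact hno r' hr'.1 hr'.2
  obtain ⟨r', hsr', hr'r, htri⟩ := hex
  have hr't : r' < t := by
    refine lt_of_le_of_ne (hr'r.trans hr.2) ?_
    rintro rfl
    exact hcon (le_antisymm hr'r hr.2 ▸ Or.inr htri)
  have e1 : D.tri a b c = D.tri b c a := by
    simp only [GoodDrawing.tri, D.arc_symm c a, D.arc_symm b a]
    ext z; simp only [mem_union]; tauto
  have e2 : D.tri a b c = D.tri a c b := by
    simp only [GoodDrawing.tri, D.arc_symm c b]
    ext z; simp only [mem_union]; tauto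
  rcases id htri with (h1 | h1) | h1
  · exact h.main_edge hab hac hbc hq hb hxy hx hy he her hs ht hsr' hr't h1
  · rw [e1] at hq hb hx hy
    exact h.main_edge hbc hab.symm hac.symm hq hb hxy hx (by tauto) he her hs ht hsr' hr't h1
  · rw [e2] at hq hb hx hy
    exact h.main_edge hac hab hbc.symm hq hb hxy hx (by tauto) he her hs ht hsr' hr't h1

theorem main (h : PLData D L) {a b c : Fin n} (hab : a ≠ b) (hac : a ≠ c) (hbc : b ≠ c)
    {q : Plane} (hq : q ∉ D.tri a b c)
    (hb : Bornology.IsBounded (connectedComponentIn (D.tri a b c)ᶜ q)) :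
    D.ConvexDisc (connectedComponentIn (D.tri a b c)ᶜ q ∪ D.tri a b c) := by
  have key : ∀ x, D.vtx x ∈ D.tri a b c → x = a ∨ x = b ∨ x = c := by
    intro x hx
    by_contra! hno
    rcases hx with (hx | hx) | hx
    · exact D.vtx_not_mem a b x hab hno.1 hno.2.1 hx
    · exact D.vtx_not_mem b c x hbc hno.2.1 hno.2.2 hx
    · exact D.vtx_not_mem a c x hac hno.1 hno.2.2 hx
  intro x y hxy hx hy
  rcases hx with hx | hx
  · exact h.main_arc hab hac hbc hq hb hxy hx (hy.imp_right (key y))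
  · rcases hy with hy | hy
    · rw [D.arc_symm]
      exact h.main_arc hab hac hbc hq hb hxy.symm hy (Or.inr (key x hx))
    · refine Subset.trans ?_ subset_union_right
      have s1 : D.arc a b ⊆ D.tri a b c := fun z hz => Or.inl (Or.inl hz)
      have s2 : D.arc b c ⊆ D.tri a b c := fun z hz => Or.inl (Or.inr hz)
      have s3 : D.arc a c ⊆ D.tri a b c := fun z hz => Or.inr hz
      rcases key x hx with rfl | rfl | rfl <;> rcases key y hy with rfl | rfl | rfl <;>
        first | exact absurd rfl hxy | assumption | (rw [D.arc_symm]; assumption)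

end PLData

theorem CrossesAt.map {X Y : Type*} [TopologicalSpace X] [TopologicalSpace Y] {ψ : X → Y}
    (hψ : IsOpenEmbedding ψ) {σ γ : Set X} {p : X} (h : CrossesAt σ γ p) :
    CrossesAt (ψ '' σ) (ψ '' γ) (ψ p) := by
  refine ⟨mem_image_of_mem _ h.1, mem_image_of_mem _ h.2.1, fun U hU => ?_⟩
  obtain ⟨V, hV, hVU, C₁, C₂, h1, h2, h3, h4, h5, h6⟩ :=
    h.2.2 (ψ ⁻¹' U) (hψ.continuous.continuousAt hU)
  refine ⟨ψ '' V, hψ.isOpenMap.image_mem_nhds hV, image_subset_iff.2 hVU, ψ '' C₁, ψ '' C₂, ?_, ?_,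
    h3.image _ hψ.continuous.continuousOn, h4.image _ hψ.continuous.continuousOn, ?_, ?_⟩
  · rw [← image_sdiff hψ.injective, h1, image_union]
  · exact (disjoint_image_iff hψ.injective).2 h2
  · rw [← image_inter hψ.injective]; exact h5.image _
  · rw [← image_inter hψ.injective]; exact h6.image _

/-- Transport of a good drawing along an open embedding. -/
def GoodDrawing.mapEmb {n : ℕ} {X Y : Type*} [TopologicalSpace X] [TopologicalSpace Y]
    (D : GoodDrawing n X) (ψ : X → Y) (hψ : IsOpenEmbedding ψ) : GoodDrawing n Y where
  vtx i := ψ (D.vtx i)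
  arc u v := ψ '' D.arc u v
  vtx_inj := hψ.injective.comp D.vtx_inj
  arc_symm u v := by rw [D.arc_symm]
  isArc u v huv := by
    obtain ⟨f, h1, h2, h3, h4, h5⟩ := D.isArc u v huv
    refine ⟨ψ ∘ f, hψ.continuous.comp_continuousOn h1, hψ.injective.comp_injOn h2, ?_, ?_, ?_⟩
    · simp [h3]
    · simp [h4]
    · rw [h5, image_comp]
  vtx_not_mem u v w h1 h2 h3 h := by
    rw [hψ.injective.mem_set_image] at h
    exact D.vtx_not_mem u v w h1 h2 h3 h
  adj_arcs u v w h1 h2 h3 := by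
    rw [← image_inter hψ.injective, D.adj_arcs u v w h1 h2 h3, image_singleton]
  indep_arcs u v x y h1 h2 h3 h4 h5 h6 := by
    obtain ⟨h7, h8⟩ := D.indep_arcs u v x y h1 h2 h3 h4 h5 h6
    rw [← image_inter hψ.injective]
    refine ⟨h7.image _, ?_⟩
    rintro _ ⟨p, hp, rfl⟩
    exact ⟨(h8 p hp).1.map hψ, (h8 p hp).2.map hψ⟩
  no_triple_pt p hp u v x y s t h1 h2 h3 h4 h5 h6 := by
    rintro ⟨⟨z, hz, rfl⟩, hz2, hz3⟩
    rw [hψ.injective.mem_set_image] at hz2 hz3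
    refine D.no_triple_pt z ?_ u v x y s t h1 h2 h3 h4 h5 h6 ⟨hz, hz2, hz3⟩
    rintro ⟨i, rfl⟩
    exact hp ⟨i, rfl⟩

theorem sphere_part (n : ℕ) (D : GoodDrawing n Plane) {ψ : Plane → SpherePt}
    (hψ : IsOpenEmbedding ψ) {p : SpherePt} (hr : range ψ = {p}ᶜ)
    (hD : ∀ a b c : Fin n, a ≠ b → a ≠ c → b ≠ c → ∀ q, q ∉ D.tri a b c →
      Bornology.IsBounded (connectedComponentIn (D.tri a b c)ᶜ q) →
      D.ConvexDisc (connectedComponentIn (D.tri a b c)ᶜ q ∪ D.tri a b c)) :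
    (D.mapEmb ψ hψ).FaceConvex (connectedComponentIn ((D.mapEmb ψ hψ).image Set.univ)ᶜ p) := by
  have : LocallyConnectedSpace SpherePt :=
    have : Fact (Module.finrank ℝ (EuclideanSpace ℝ (Fin 3)) = 2 + 1) := ⟨by simp⟩
    ChartedSpace.locallyConnectedSpace (EuclideanSpace ℝ (Fin 2)) SpherePt
  set D' := D.mapEmb ψ hψ with hD'
  have hpr : ∀ z, ψ z ≠ p := fun z h => by
    have : ψ z ∈ ({p}ᶜ : Set SpherePt) := hr ▸ mem_range_self z
    exact this h
  have hpi : p ∉ D'.image univ := by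
    rintro (⟨i, -, h⟩ | h)
    · exact hpr _ h
    · simp only [mem_iUnion] at h
      obtain ⟨u, -, v, -, -, z, -, hz⟩ := h
      exact hpr _ hz
  refine ⟨⟨p, hpi, rfl⟩, ?_⟩
  rintro a b c hab hac hbc _ ⟨q, hq, rfl⟩ hF
  have htri : D'.tri a b c = ψ '' D.tri a b c := by
    simp only [GoodDrawing.tri, image_union]; rfl
  have hti : D'.tri a b c ⊆ D'.image univ := by
    intro z hz
    right
    simp only [mem_iUnion]
    rcases hz with (hz | hz) | hz
    · exact ⟨a, mem_univ _, b, mem_univ _, hab, hz⟩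
    · exact ⟨b, mem_univ _, c, mem_univ _, hbc, hz⟩
    · exact ⟨a, mem_univ _, c, mem_univ _, hac, hz⟩
  have hpt : p ∉ D'.tri a b c := fun h => hpi (hti h)
  set R' := connectedComponentIn (D'.tri a b c)ᶜ q with hR'
  have hpR : p ∉ R' := by
    intro hp
    apply hF
    refine Subset.trans ?_ subset_union_left
    rw [hR', connectedComponentIn_eq hp]
    exact connectedComponentIn_mono p (compl_subset_compl.2 hti)
  have hqR : q ∈ R' := mem_connectedComponentIn hq
  have hRr : R' ⊆ range ψ := by
    rw [hr]; intro z hz h; exact hpR (h ▸ hz)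
  obtain ⟨q₀, rfl⟩ := hRr hqR
  have hq₀ : q₀ ∉ D.tri a b c := fun h => hq (htri ▸ mem_image_of_mem _ h)
  have hRR : R' = ψ '' connectedComponentIn (D.tri a b c)ᶜ q₀ := by
    refine Subset.antisymm ?_ ?_
    · rw [← image_preimage_eq_of_subset hRr]
      refine image_mono ?_
      refine IsPreconnected.subset_connectedComponentIn ?_ hqR ?_
      · exact isPreconnected_connectedComponentIn.preimage_of_isOpenMap hψ.injective
          hψ.isOpenMap hRr
      · intro z hz hzt
        exact connectedComponentIn_subset _ _ hz (htri ▸ mem_image_of_mem _ hzt)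
    · refine (isPreconnected_connectedComponentIn.image _
        hψ.continuous.continuousOn).subset_connectedComponentIn
        (mem_image_of_mem _ (mem_connectedComponentIn hq₀)) ?_
      rintro _ ⟨z, hz, rfl⟩ hzt
      rw [htri, hψ.injective.mem_set_image] at hzt
      exact connectedComponentIn_subset _ _ hz hzt
  have hclosed : IsClosed (D'.tri a b c) := by
    have hA : ∀ u v, u ≠ v → IsClosed (D'.arc u v) := by
      intro u v huv
      obtain ⟨f, h1, -, -, -, h5⟩ := D'.isArc u v huv
      rw [h5]; exact (isCompact_Icc.image_of_continuousOn h1).isClosed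
    exact ((hA a b hab).union (hA b c hbc)).union (hA a c hac)
  have hbdd : Bornology.IsBounded (connectedComponentIn (D.tri a b c)ᶜ q₀) := by
    set P := connectedComponentIn (D'.tri a b c)ᶜ p with hP
    have hPo : IsOpen P := hclosed.isOpen_compl.connectedComponentIn
    have hpP : p ∈ P := mem_connectedComponentIn hpt
    have hcomp : IsCompact (ψ ⁻¹' Pᶜ) := by
      refine hψ.isInducing.isCompact_preimage' hPo.isClosed_compl.isCompact ?_
      rw [hr]; intro z hz h; exact hz (h ▸ hpP)
    refine hcomp.isBounded.subset ?_
    intro z hz hzP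
    have hzR : ψ z ∈ R' := hRR ▸ mem_image_of_mem _ hz
    apply hpR
    rw [hR', connectedComponentIn_eq hzR, ← connectedComponentIn_eq hzP]
    exact hpP
  have hconv := hD a b c hab hac hbc q₀ hq₀ hbdd
  rw [hRR, htri, ← image_union]
  intro x y hxy hx hy
  have hx' := hψ.injective.mem_set_image.1 hx
  have hy' := hψ.injective.mem_set_image.1 hy
  exact image_mono (hconv x y hxy hx' hy')

/-- In a pseudolinear good drawing of `K_n` in the plane, the bounded closed disc of
every 3-cycle is convex; consequently the spherical drawing obtained via the inverse of
any stereographic projection is face-convex, with outer face the face containing the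
projection point. -/
theorem faceConvex_of_pseudolinear (n : ℕ) (D : GoodDrawing n Plane)
    (hD : D.Pseudolinear) :
    (∀ a b c : Fin n, a ≠ b → a ≠ c → b ≠ c →
      ∀ Δ : Set Plane, IsClosedSide (D.tri a b c) Δ → Bornology.IsBounded Δ →
        D.ConvexDisc Δ) ∧
    ∀ (p : SpherePt) (φ : {x : SpherePt // x ≠ p} ≃ₜ Plane),
      ∃ D' : GoodDrawing n SpherePt,
        (∀ i : Fin n, D'.vtx i = ((φ.symm (D.vtx i) : {x : SpherePt // x ≠ p}) : SpherePt)) ∧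
        (∀ u v : Fin n, u ≠ v →
          D'.arc u v = Subtype.val '' (⇑φ.symm '' D.arc u v)) ∧
        D'.FaceConvex (connectedComponentIn (D'.image Set.univ)ᶜ p) := by
  obtain ⟨L, hL⟩ := exists_PLData hD
  have key : ∀ a b c : Fin n, a ≠ b → a ≠ c → b ≠ c → ∀ q, q ∉ D.tri a b c →
      Bornology.IsBounded (connectedComponentIn (D.tri a b c)ᶜ q) →
      D.ConvexDisc (connectedComponentIn (D.tri a b c)ᶜ q ∪ D.tri a b c) :=
    fun a b c hab hac hbc q hq hb => hL.main hab hac hbc hq hb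
  refine ⟨?_, ?_⟩
  · rintro a b c hab hac hbc _ ⟨q, hq, rfl⟩ hb
    exact key a b c hab hac hbc q hq (hb.subset subset_union_left)
  · intro p φ
    have hψ : IsOpenEmbedding (Subtype.val ∘ φ.symm : Plane → SpherePt) :=
      (IsOpen.isOpenEmbedding_subtypeVal
        (isOpen_compl_singleton (x := p))).comp φ.symm.isOpenEmbedding
    have hr : range (Subtype.val ∘ φ.symm : Plane → SpherePt) = {p}ᶜ := by
      rw [range_comp, φ.symm.surjective.range_eq, image_univ]
      exact Subtype.range_coe_subtype
    refine ⟨D.mapEmb _ hψ, fun i => rfl, fun u v _ => ?_, sphere_part n D hψ hr key⟩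
    exact image_comp _ _ _

end
end
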